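/- arXiv:2502.12229 — 2 statements merged into one kernel-verified Lean document; each statement's English description precedes it below -/
import Mathlib

section
/- Let μ be a measure on ℝ with all moments finite and infinite support. Assume: (1) μ is determinate, (2) supp(μ) ⊆ [0,∞), (3) 0 ∈ supp(μ), (4) μ({0}) = 0. Then for every n ∈ ℕ₀, the linear span of the monomial functions {x ↦ x^k : k ≥ n} is dense in L²(μ). -/
open MeasureTheory Polynomial Filter

noncomputable section

/-- A measure on `ℝ` has all moments finite. -/
def HasAllMoments (μ : Measure ℝ) : Prop :=
  ∀ n : ℕ, Integrable (fun x : ℝ => |x| ^ n) μ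

/-- The (topological) support of a measure on `ℝ`: points all of whose
neighborhoods have positive measure. -/
def mSupp (μ : Measure ℝ) : Set ℝ :=
  {x : ℝ | ∀ U ∈ nhds x, μ U ≠ 0}

/-- A measure with all moments finite is determinate if it is the unique measure
with all moments finite having its moment sequence. -/
def IsDeterminate (μ : Measure ℝ) : Prop :=
  ∀ ν : Measure ℝ, HasAllMoments ν →
    (∀ n : ℕ, ∫ x, x ^ n ∂ν = ∫ x, x ^ n ∂μ) → ν = μ

/-!
By Hahn–Banach and the Riesz representation theorem, determinacy means that every bounded continuous
function has polynomial majorants whose integrals are arbitrarily close to its own. As nonnegative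
polynomials are sums of squares, this produces polynomials of small norm taking the value `1` at a
prescribed point: at `±i`, with respect to `dμ / (1 + x²)`, so that the orthogonal complement of the
polynomials is stable under the resolvents `1 / (x ∓ i)` and hence trivial, and, as `μ` has no mass
at `0`, at the origin, so that `x, x², …` are total as well.

Suppose now that `xᵐ⁺¹, xᵐ⁺², …` are total but `xᵐ⁺², xᵐ⁺³, …` are not. A function orthogonal to the
latter represents, up to a factor, the evaluation `p ↦ p(0)` in the norm of `xᵐ⁺¹ p`. For this norm
the map `p ↦ (p - p(0)) / x` is strictly triangular in the orthonormal polynomials and its skew part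
has rank two, so it is Hilbert–Schmidt, hence bounded. This contradicts the existence of functions
concentrated arbitrarily close to `0`.
-/

open scoped Topology

namespace HasAllMoments

variable {μ : Measure ℝ} {F : Type*} [NormedAddCommGroup F] [NormedSpace ℝ F]

lemma isFiniteMeasure (hμ : HasAllMoments μ) : IsFiniteMeasure μ := by
  simpa [integrable_const_iff] using hμ 0

lemma integrable_eval (hμ : HasAllMoments μ) (p : ℝ[X]) : Integrable (fun x => p.eval x) μ := by
  induction p using Polynomial.induction_on' with
  | add p q hp hq =>
    simp only [eval_add]
    exact hp.add hq
  | monomial n a =>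
    simp only [eval_monomial]
    exact ((hμ n).mono' (by fun_prop) (ae_of_all _ fun x => by simp)).const_mul a

lemma memLp_eval (hμ : HasAllMoments μ) (p : ℝ[X]) : MemLp (fun x => p.eval x) 2 μ := by
  rw [memLp_two_iff_integrable_sq p.continuous.aestronglyMeasurable]
  exact (hμ.integrable_eval (p ^ 2)).congr (ae_of_all _ fun x => eval_pow 2)

lemma integrable_eval_smul (hμ : HasAllMoments μ) {h : ℝ → F} (hh : MemLp h 2 μ) (p : ℝ[X]) :
    Integrable (fun x => p.eval x • h x) μ :=
  memLp_one_iff_integrable.1 (hh.smul (hμ.memLp_eval p))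

lemma integrable_pow_smul (hμ : HasAllMoments μ) {h : ℝ → F} (hh : MemLp h 2 μ) (k : ℕ) :
    Integrable (fun x => x ^ k • h x) μ := by
  simpa only [eval_pow, eval_X] using hμ.integrable_eval_smul hh (X ^ k)

end HasAllMoments

/-! ### Positive functionals on continuous functions of polynomial growth -/

/-- The space of continuous functions `ℝ → ℝ` dominated in absolute value by a polynomial; it is the
natural domain of the integral against a measure with all moments. -/
def polyGrowth : Submodule ℝ (ℝ → ℝ) where
  carrier := {φ | Continuous φ ∧ ∃ q : ℝ[X], ∀ x, |φ x| ≤ q.eval x}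
  zero_mem' := ⟨continuous_const, 0, fun x => by simp⟩
  add_mem' := by
    rintro φ ψ ⟨hφ, p, hp⟩ ⟨hψ, q, hq⟩
    refine ⟨hφ.add hψ, p + q, fun x => ?_⟩
    rw [eval_add]
    exact (abs_add_le _ _).trans (add_le_add (hp x) (hq x))
  smul_mem' := by
    rintro c φ ⟨hφ, p, hp⟩
    refine ⟨hφ.const_smul c, C |c| * p, fun x => ?_⟩
    simp only [Pi.smul_apply, smul_eq_mul, abs_mul, eval_mul, eval_C]
    exact mul_le_mul_of_nonneg_left (hp x) (abs_nonneg _)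

namespace polyGrowth

lemma mem_of_bounded {f : ℝ → ℝ} (hf : Continuous f) {M : ℝ} (hM : ∀ x, |f x| ≤ M) :
    f ∈ polyGrowth :=
  ⟨hf, C M, fun x => by simpa using hM x⟩

/-- A polynomial function as an element of `polyGrowth`. -/
def ofPolynomial (p : ℝ[X]) : polyGrowth :=
  ⟨fun x => p.eval x, p.continuous, 1 + p ^ 2, fun x => by
    simp only [eval_add, eval_one, eval_pow]
    nlinarith [sq_nonneg (|p.eval x| - 1), sq_abs (p.eval x)]⟩

@[simp] lemma ofPolynomial_apply (p : ℝ[X]) (x : ℝ) : (ofPolynomial p).1 x = p.eval x := rfl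

lemma integrable {μ : Measure ℝ} (hμ : HasAllMoments μ) (φ : polyGrowth) : Integrable φ.1 μ := by
  obtain ⟨φ, hφ, q, hq⟩ := φ
  exact (hμ.integrable_eval q).mono' hφ.aestronglyMeasurable (ae_of_all _ hq)

/-- A compactly supported continuous approximation of the constant `1`. -/
def cutoff (k : ℕ) (x : ℝ) : ℝ := max 0 (1 - (x / (k + 1)) ^ 2)

@[fun_prop]
lemma continuous_cutoff (k : ℕ) : Continuous (cutoff k) := by unfold cutoff; fun_prop

lemma cutoff_nonneg (k : ℕ) (x : ℝ) : 0 ≤ cutoff k x := le_max_left _ _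

lemma cutoff_le_one (k : ℕ) (x : ℝ) : cutoff k x ≤ 1 :=
  max_le zero_le_one (sub_le_self _ (sq_nonneg _))

lemma one_sub_cutoff_le (k : ℕ) (x : ℝ) : 1 - cutoff k x ≤ (x / (k + 1)) ^ 2 := by
  have := le_max_right 0 (1 - (x / (k + 1)) ^ 2)
  unfold cutoff
  linarith

lemma hasCompactSupport_cutoff (k : ℕ) : HasCompactSupport (cutoff k) := by
  refine HasCompactSupport.intro (isCompact_closedBall (0 : ℝ) (k + 1)) fun x hx => ?_
  have hk : (0 : ℝ) < k + 1 := by positivity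
  have hx' : 1 ≤ |x / (k + 1)| := by
    rw [abs_div, abs_of_pos hk, one_le_div hk]
    rw [Metric.mem_closedBall, dist_zero_right, Real.norm_eq_abs, not_le] at hx
    exact hx.le
  have : 1 ≤ (x / (k + 1)) ^ 2 := (one_le_sq_iff_one_le_abs _).2 hx'
  exact max_eq_left (by linarith)

lemma tendsto_cutoff (x : ℝ) : Tendsto (fun k => cutoff k x) atTop (𝓝 1) := by
  have h := ((tendsto_one_div_add_atTop_nhds_zero_nat (𝕜 := ℝ)).const_mul x).pow 2
  simpa [cutoff, div_eq_mul_inv] using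
    (tendsto_const_nhds (x := (0 : ℝ))).max ((tendsto_const_nhds (x := (1 : ℝ))).sub h)

lemma abs_mul_cutoff_le (k : ℕ) (t x : ℝ) : |t * cutoff k x| ≤ |t| := by
  rw [abs_mul, abs_of_nonneg (cutoff_nonneg k x)]
  exact mul_le_of_le_one_right (abs_nonneg _) (cutoff_le_one k x)

/-- The truncation of a function of polynomial growth by `cutoff k`. -/
def truncate (k : ℕ) (φ : polyGrowth) : polyGrowth :=
  ⟨fun x => φ.1 x * cutoff k x, φ.2.1.mul (continuous_cutoff k),
    φ.2.2.imp fun _ hq x => (abs_mul_cutoff_le k _ x).trans (hq x)⟩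

lemma hasCompactSupport_truncate (k : ℕ) (φ : polyGrowth) : HasCompactSupport (truncate k φ).1 :=
  (hasCompactSupport_cutoff k).mul_left

lemma tendsto_truncate (φ : polyGrowth) (x : ℝ) :
    Tendsto (fun k => (truncate k φ).1 x) atTop (𝓝 (φ.1 x)) := by
  simpa [truncate] using (tendsto_cutoff x).const_mul (φ.1 x)

section PositiveFunctional

variable (g : polyGrowth →ₚ[ℝ] ℝ)

lemma abs_map_le {φ ψ : polyGrowth} (h : ∀ x, |φ.1 x| ≤ ψ.1 x) : |g φ| ≤ g ψ := by
  refine abs_le'.2 ⟨OrderHomClass.mono g fun x => (le_abs_self _).trans (h x), ?_⟩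
  rw [← map_neg]
  exact OrderHomClass.mono g fun x => (neg_le_abs _).trans (h x)

lemma tendsto_map_truncate (φ : polyGrowth) :
    Tendsto (fun k => g (truncate k φ)) atTop (𝓝 (g φ)) := by
  obtain ⟨q, hq⟩ := φ.2.2
  let ψ := ofPolynomial (X ^ 2 * q)
  have htail (k : ℕ) : |g (truncate k φ) - g φ| ≤ (1 / ((k : ℝ) + 1)) ^ 2 * g ψ := by
    rw [← map_sub, ← smul_eq_mul, ← map_smul]
    refine abs_map_le g fun x => ?_
    calc |φ.1 x * cutoff k x - φ.1 x| = |φ.1 x| * (1 - cutoff k x) := by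
          rw [abs_sub_comm, ← mul_one_sub, abs_mul,
            abs_of_nonneg (sub_nonneg.2 (cutoff_le_one k x))]
      _ ≤ q.eval x * (x / (k + 1)) ^ 2 :=
          mul_le_mul (hq x) (one_sub_cutoff_le k x) (sub_nonneg.2 (cutoff_le_one k x))
            ((abs_nonneg _).trans (hq x))
      _ = ((1 / ((k : ℝ) + 1)) ^ 2 • ψ).1 x := by
          simp only [Submodule.coe_smul, Pi.smul_apply, ψ, ofPolynomial_apply, eval_mul, eval_pow,
            eval_X, smul_eq_mul]
          ring
  have hzero : Tendsto (fun k : ℕ => (1 / ((k : ℝ) + 1)) ^ 2 * g ψ) atTop (𝓝 0) := by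
    simpa using ((tendsto_one_div_add_atTop_nhds_zero_nat (𝕜 := ℝ)).pow 2).mul_const (g ψ)
  exact tendsto_sub_nhds_zero_iff.1 (squeeze_zero_norm htail hzero)

open CompactlySupported in
lemma exists_measure_integral_truncate :
    ∃ ν : Measure ℝ, ∀ k φ, Integrable (truncate k φ).1 ν ∧
      ∫ x, (truncate k φ).1 x ∂ν = g (truncate k φ) := by
  have hmem (f : C_c(ℝ, ℝ)) : (f : ℝ → ℝ) ∈ polyGrowth :=
    (f.hasCompactSupport.exists_bound_of_continuous f.continuous).elim
      fun _ hM => mem_of_bounded f.continuous hM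
  let Λ₀ : C_c(ℝ, ℝ) →ₗ[ℝ] ℝ :=
    { toFun := fun f => g ⟨f, hmem f⟩
      map_add' := fun a b => (map_add g ⟨a, hmem a⟩ ⟨b, hmem b⟩)
      map_smul' := fun c a => (map_smul g c ⟨a, hmem a⟩) }
  let Λ : C_c(ℝ, ℝ) →ₚ[ℝ] ℝ :=
    PositiveLinearMap.mk₀ Λ₀ fun f hf => map_nonneg g (a := ⟨f, hmem f⟩) hf
  exact ⟨RealRMK.rieszMeasure Λ, fun k φ =>
    ⟨(truncate k φ).2.1.integrable_of_hasCompactSupport (hasCompactSupport_truncate k φ),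
      RealRMK.integral_rieszMeasure Λ ⟨⟨_, (truncate k φ).2.1⟩, hasCompactSupport_truncate k φ⟩⟩⟩

lemma integrable_of_integral_truncate {ν : Measure ℝ} (hν : ∀ k φ, Integrable (truncate k φ).1 ν ∧
      ∫ x, (truncate k φ).1 x ∂ν = g (truncate k φ))
    {φ : polyGrowth} (hφ : 0 ≤ φ) : Integrable φ.1 ν := by
  have hnonneg (k : ℕ) (x : ℝ) : 0 ≤ (truncate k φ).1 x := mul_nonneg (hφ x) (cutoff_nonneg k x)
  refine integrable_of_tendsto (ae_of_all _ (tendsto_truncate φ)) (fun k => (hν k φ).1.1) ?_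
  refine ne_top_of_le_ne_top (ENNReal.ofReal_ne_top (r := g φ)) ?_
  refine liminf_le_of_frequently_le' (Frequently.of_forall fun k => ?_)
  rw [← ofReal_integral_norm_eq_lintegral_enorm (hν k φ).1]
  refine ENNReal.ofReal_le_ofReal ?_
  calc ∫ x, ‖(truncate k φ).1 x‖ ∂ν = g (truncate k φ) := by
        simp only [Real.norm_of_nonneg (hnonneg k _), (hν k φ).2]
    _ ≤ g φ := OrderHomClass.mono g fun x => mul_le_of_le_one_right (hφ x) (cutoff_le_one k x)

theorem exists_measure_eq_integral :
    ∃ ν : Measure ℝ, HasAllMoments ν ∧ ∀ φ : polyGrowth, g φ = ∫ x, φ.1 x ∂ν := by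
  obtain ⟨ν, hν⟩ := exists_measure_integral_truncate g
  have hmom : HasAllMoments ν := fun n =>
    integrable_of_integral_truncate g hν
      (φ := ⟨fun x => |x| ^ n, by fun_prop, 1 + X ^ (2 * n), fun x => by
        simp only [abs_pow, abs_abs, eval_add, eval_one, eval_pow, eval_X, pow_mul',
          ← sq_abs (x ^ n)]
        nlinarith [sq_nonneg (|x| ^ n - 1)]⟩)
      fun x => pow_nonneg (abs_nonneg x) n
  refine ⟨ν, hmom, fun φ => tendsto_nhds_unique (tendsto_map_truncate g φ) ?_⟩
  simp only [← (hν _ φ).2]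
  exact tendsto_integral_of_dominated_convergence (fun x => |φ.1 x|)
    (fun k => (hν k φ).1.1) (integrable hmom φ).abs
    (fun k => ae_of_all _ fun x => abs_mul_cutoff_le k _ x) (ae_of_all _ (tendsto_truncate φ))

end PositiveFunctional

end polyGrowth

/-! ### One-sided polynomial approximation -/

lemma exists_linearMap_le_sublinear_apply_eq {E : Type*} [AddCommGroup E] [Module ℝ E] {N : E → ℝ}
    (hsmul : ∀ c : ℝ, 0 < c → ∀ x, N (c • x) = c * N x) (hadd : ∀ x y, N (x + y) ≤ N x + N y)
    (x : E) : ∃ g : E →ₗ[ℝ] ℝ, g x = N x ∧ ∀ y, g y ≤ N y := by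
  have hzero : N 0 = 0 := by
    have := hsmul 2 two_pos 0
    rw [smul_zero] at this
    linarith
  have hspan (c : ℝ) : c * N x ≤ N (c • x) := by
    rcases lt_trichotomy c 0 with hc | rfl | hc
    · have := hadd (c • x) (-c • x)
      rw [← add_smul, add_neg_cancel, zero_smul, hzero, hsmul (-c) (neg_pos.2 hc)] at this
      linarith
    · simp [hzero]
    · exact (hsmul c hc x).ge
  have hwell (c : ℝ) (hc : c • x = 0) : c • N x = 0 := by
    rcases smul_eq_zero.1 hc with rfl | rfl <;> simp [hzero]
  obtain ⟨g, hgx, hgN⟩ := exists_extension_of_le_sublinear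
    (LinearPMap.mkSpanSingleton' x (N x) hwell) N hsmul hadd (by
      rintro ⟨_, hy⟩
      obtain ⟨c, rfl⟩ := Submodule.mem_span_singleton.1 hy
      exact (LinearPMap.mkSpanSingleton'_apply x (N x) hwell c hy).trans_le (hspan c))
  exact ⟨g, (hgx ⟨x, Submodule.mem_span_singleton_self x⟩).trans
    (LinearPMap.mkSpanSingleton'_apply_self _ _ _ _), hgN⟩

/-- The upper integral of `φ` determined by the moments of `μ`: the infimum of the integrals of the
polynomials majorizing `φ`. -/
def upperIntegral (μ : Measure ℝ) (φ : polyGrowth) : ℝ :=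
  ⨅ q : {q : ℝ[X] // φ ≤ polyGrowth.ofPolynomial q}, ∫ x, q.1.eval x ∂μ

section UpperIntegral

variable {μ : Measure ℝ}

instance nonempty_polynomial_majorant (φ : polyGrowth) :
    Nonempty {q : ℝ[X] // φ ≤ polyGrowth.ofPolynomial q} :=
  φ.2.2.elim fun q hq => ⟨⟨q, fun x => (le_abs_self _).trans (hq x)⟩⟩

lemma upperIntegral_le (hmom : HasAllMoments μ) {φ : polyGrowth} {q : ℝ[X]}
    (hq : φ ≤ polyGrowth.ofPolynomial q) : upperIntegral μ φ ≤ ∫ x, q.eval x ∂μ := by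
  refine ciInf_le ⟨∫ x, φ.1 x ∂μ, ?_⟩ (⟨q, hq⟩ : {q : ℝ[X] // φ ≤ polyGrowth.ofPolynomial q})
  rintro _ ⟨p, rfl⟩
  exact integral_mono (polyGrowth.integrable hmom φ) (hmom.integrable_eval p.1) p.2

lemma upperIntegral_smul (hmom : HasAllMoments μ) (c : ℝ) (hc : 0 < c) (φ : polyGrowth) :
    upperIntegral μ (c • φ) = c * upperIntegral μ φ := by
  have hle (c : ℝ) (hc : 0 < c) (φ : polyGrowth) :
      upperIntegral μ (c • φ) ≤ c * upperIntegral μ φ := by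
    rw [← div_le_iff₀' hc]
    refine le_ciInf fun q => ?_
    rw [div_le_iff₀' hc, ← integral_const_mul]
    refine (upperIntegral_le hmom (q := C c * q.1) fun x => ?_).trans_eq (by simp)
    simpa using mul_le_mul_of_nonneg_left (q.2 x) hc.le
  refine le_antisymm (hle c hc φ) ?_
  have := hle c⁻¹ (inv_pos.2 hc) (c • φ)
  rwa [inv_smul_smul₀ hc.ne', ← div_eq_inv_mul, le_div_iff₀' hc] at this

lemma upperIntegral_add_le (hmom : HasAllMoments μ) (φ ψ : polyGrowth) :
    upperIntegral μ (φ + ψ) ≤ upperIntegral μ φ + upperIntegral μ ψ := by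
  refine le_ciInf_add_ciInf fun p q => ?_
  rw [← integral_add (hmom.integrable_eval p.1) (hmom.integrable_eval q.1)]
  refine (upperIntegral_le hmom (q := p.1 + q.1) fun x => ?_).trans_eq (by simp)
  simpa using add_le_add (p.2 x) (q.2 x)

/- A functional dominated by the upper integral and agreeing with it at `φ` is positive and has the
moments of `μ`, hence is integration against `μ`. -/
theorem upperIntegral_eq_integral (hmom : HasAllMoments μ) (hdet : IsDeterminate μ)
    (φ : polyGrowth) : upperIntegral μ φ = ∫ x, φ.1 x ∂μ := by
  obtain ⟨g, hgφ, hg⟩ := exists_linearMap_le_sublinear_apply_eq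
    (upperIntegral_smul hmom) (upperIntegral_add_le hmom) φ
  have hle {ψ : polyGrowth} {q : ℝ[X]} (hq : ψ ≤ polyGrowth.ofPolynomial q) :
      g ψ ≤ ∫ x, q.eval x ∂μ := (hg ψ).trans (upperIntegral_le hmom hq)
  have hpoly (p : ℝ[X]) : g (polyGrowth.ofPolynomial p) = ∫ x, p.eval x ∂μ := by
    refine le_antisymm (hle le_rfl) ?_
    have := hle (ψ := -polyGrowth.ofPolynomial p) (q := -p) fun x => by simp
    simp only [map_neg, eval_neg, integral_neg] at this
    linarith
  have hnonneg (ψ : polyGrowth) (hψ : 0 ≤ ψ) : 0 ≤ g ψ := by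
    have := hle (ψ := -ψ) (q := 0) fun x => by simpa using hψ x
    simp only [map_neg, eval_zero, integral_zero] at this
    linarith
  obtain ⟨ν, hν, hgν⟩ :=
    polyGrowth.exists_measure_eq_integral (PositiveLinearMap.mk₀ g hnonneg)
  have hgν' (ψ : polyGrowth) : g ψ = ∫ x, ψ.1 x ∂ν := hgν ψ
  have hνμ : ν = μ := hdet ν hν fun n => by
    simpa using (hgν' _).symm.trans (hpoly (X ^ n))
  rw [← hgφ, hgν', hνμ]

lemma exists_polynomial_majorant_integral_lt (hmom : HasAllMoments μ) (hdet : IsDeterminate μ)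
    {f : ℝ → ℝ} (hf : Continuous f) {M : ℝ} (hM : ∀ x, |f x| ≤ M) {ε : ℝ} (hε : 0 < ε) :
    ∃ q : ℝ[X], (∀ x, f x ≤ q.eval x) ∧ ∫ x, q.eval x ∂μ < ∫ x, f x ∂μ + ε := by
  have hlt := (upperIntegral_eq_integral hmom hdet
    ⟨f, polyGrowth.mem_of_bounded hf hM⟩).trans_lt (lt_add_of_pos_right _ hε)
  obtain ⟨q, hq⟩ := exists_lt_of_ciInf_lt hlt
  exact ⟨q.1, q.2, hq⟩

end UpperIntegral

/-! ### Nonnegative polynomials are sums of squares -/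

section SumSq

variable {s : ℝ[X]}

/- `a` is a minimum point of `s`, so that `s - s(a)` has a double root there. -/
lemma exists_eq_C_add_sq_mul_of_nonneg (hs : ∀ x, 0 ≤ s.eval x) :
    ∃ (a : ℝ) (u : ℝ[X]), s = C (s.eval a) + (X - C a) ^ 2 * u ∧ ∀ x, 0 ≤ u.eval x := by
  obtain ⟨a, ha⟩ := s.exists_forall_norm_le
  simp only [Real.norm_of_nonneg (hs _)] at ha
  have hroot : (X - C a) ^ 2 ∣ s - C (s.eval a) := by
    by_cases hconst : s - C (s.eval a) = 0
    · exact hconst ▸ dvd_zero _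
    rw [← le_rootMultiplicity_iff hconst]
    refine (one_lt_rootMultiplicity_iff_isRoot hconst).2 ⟨by simp, ?_⟩
    have hmin : IsLocalMin (fun x => s.eval x) a := Eventually.of_forall ha
    simpa using hmin.deriv_eq_zero
  obtain ⟨u, hu⟩ := hroot
  refine ⟨a, u, by rw [← hu]; ring, ?_⟩
  have hne : ∀ x ∈ ({a}ᶜ : Set ℝ), 0 ≤ u.eval x := fun x hx => by
    have hx' : 0 < (x - a) ^ 2 := sq_pos_of_ne_zero (sub_ne_zero.2 hx)
    have hux := congrArg (eval x) hu
    simp only [eval_sub, eval_mul, eval_pow, eval_X, eval_C] at hux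
    exact nonneg_of_mul_nonneg_right (hux ▸ sub_nonneg.2 (ha x)) hx'
  exact fun x => (isClosed_Ici.preimage u.continuous).closure_subset_iff.2 hne
    ((dense_compl_singleton a).closure_eq ▸ Set.mem_univ x)

lemma isSumSq_C {c : ℝ} (hc : 0 ≤ c) : IsSumSq (C c : ℝ[X]) := by
  rw [← Real.mul_self_sqrt hc, C_mul]
  exact IsSumSq.mul_self _

theorem isSumSq_of_eval_nonneg (hs : ∀ x, 0 ≤ s.eval x) : IsSumSq s := by
  induction hn : s.natDegree using Nat.strong_induction_on generalizing s with
  | _ n ih =>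
  obtain ⟨a, u, hsu, hu⟩ := exists_eq_C_add_sq_mul_of_nonneg hs
  have husq : IsSumSq u := by
    by_cases hu0 : u = 0
    · exact hu0 ▸ IsSumSq.zero
    refine ih u.natDegree ?_ hu rfl
    have hdeg := congrArg natDegree hsu
    rw [natDegree_C_add, ((monic_X_sub_C a).pow 2).natDegree_mul' hu0, natDegree_pow,
      natDegree_X_sub_C] at hdeg
    lia
  rw [hsu]
  exact (isSumSq_C (hs a)).add ((IsSquare.sq _).isSumSq.mul husq)

end SumSq

/-! ### Bounded point evaluations -/

/-- `h` is square integrable and orthogonal to every monomial `x ^ k` with `k ≥ n`. Using scalar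
multiplication rather than an inner product lets `h` be real or complex valued. -/
structure IsOrthogonalToMonomials {F : Type*} [NormedAddCommGroup F] [NormedSpace ℝ F]
    (μ : Measure ℝ) (n : ℕ) (h : ℝ → F) : Prop where
  memLp : MemLp h 2 μ
  integral_pow_smul : ∀ k, n ≤ k → ∫ x, x ^ k • h x ∂μ = 0

section Orthogonality

variable {𝕜 : Type*} [RCLike 𝕜] {μ : Measure ℝ} {n : ℕ} {h w : ℝ → 𝕜} {z G : 𝕜}

namespace IsOrthogonalToMonomials

lemma add (hμ : HasAllMoments μ) {g : ℝ → 𝕜} (hh : IsOrthogonalToMonomials μ n h)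
    (hg : IsOrthogonalToMonomials μ n g) : IsOrthogonalToMonomials μ n fun x => h x + g x where
  memLp := hh.memLp.add hg.memLp
  integral_pow_smul k hk := by
    simp only [smul_add]
    rw [integral_add (hμ.integrable_pow_smul hh.memLp k) (hμ.integrable_pow_smul hg.memLp k),
      hh.integral_pow_smul k hk, hg.integral_pow_smul k hk, add_zero]

lemma const_mul (hh : IsOrthogonalToMonomials μ n h) (c : 𝕜) :
    IsOrthogonalToMonomials μ n fun x => c * h x where
  memLp := hh.memLp.const_mul c
  integral_pow_smul k hk := by
    simp only [← mul_smul_comm]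
    rw [integral_const_mul, hh.integral_pow_smul k hk, mul_zero]

end IsOrthogonalToMonomials

lemma integral_eval_smul_of_pow (hμ : HasAllMoments μ) (hh : MemLp h 2 μ)
    (hG : ∀ k : ℕ, ∫ x, x ^ k • h x ∂μ = z ^ k * G) (p : ℝ[X]) :
    ∫ x, p.eval x • h x ∂μ = aeval z p * G := by
  induction p using Polynomial.induction_on' with
  | add p q hp hq =>
    simp only [eval_add, add_smul, map_add, add_mul]
    rw [integral_add (hμ.integrable_eval_smul hh p) (hμ.integrable_eval_smul hh q), hp, hq]
  | monomial k a =>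
    simp only [eval_monomial, mul_smul, aeval_monomial]
    rw [integral_smul, hG, Algebra.smul_def, mul_assoc]

lemma norm_integral_mul_sq_le {α : Type*} [MeasurableSpace α] {μ : Measure α} {f g : α → 𝕜}
    (hf : MemLp f 2 μ) (hg : MemLp g 2 μ) :
    ‖∫ x, f x * g x ∂μ‖ ^ 2 ≤ (∫ x, ‖f x‖ ^ 2 ∂μ) * ∫ x, ‖g x‖ ^ 2 ∂μ := by
  have holder := integral_mul_norm_le_Lp_mul_Lq Real.HolderConjugate.two_two
    (by simpa using hf) (by simpa using hg)
  simp only [Real.rpow_ofNat, ← Real.sqrt_eq_rpow] at holder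
  have htriangle : ‖∫ x, f x * g x ∂μ‖ ≤ ∫ x, ‖f x‖ * ‖g x‖ ∂μ := by
    simpa only [norm_mul] using norm_integral_le_integral_norm fun x => f x * g x
  calc ‖∫ x, f x * g x ∂μ‖ ^ 2
      ≤ (√(∫ x, ‖f x‖ ^ 2 ∂μ) * √(∫ x, ‖g x‖ ^ 2 ∂μ)) ^ 2 := by
        gcongr
        exact htriangle.trans holder
    _ = (∫ x, ‖f x‖ ^ 2 ∂μ) * ∫ x, ‖g x‖ ^ 2 ∂μ := by
        rw [mul_pow, Real.sq_sqrt (integral_nonneg fun x => by positivity),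
          Real.sq_sqrt (integral_nonneg fun x => by positivity)]

lemma norm_aeval_sq_mul_norm_sq_le (hμ : HasAllMoments μ) (hw : MemLp w ⊤ μ) (hh : MemLp h 2 μ)
    (hG : ∀ k : ℕ, ∫ x, x ^ k • (w x * h x) ∂μ = z ^ k * G) (p : ℝ[X]) :
    ‖aeval z p‖ ^ 2 * ‖G‖ ^ 2 ≤ (∫ x, ‖h x‖ ^ 2 ∂μ) * ∫ x, (p ^ 2).eval x * ‖w x‖ ^ 2 ∂μ := by
  have hpw : MemLp (fun x => p.eval x • w x) 2 μ := hw.smul (hμ.memLp_eval p)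
  calc ‖aeval z p‖ ^ 2 * ‖G‖ ^ 2 = ‖∫ x, h x * p.eval x • w x ∂μ‖ ^ 2 := by
        rw [← mul_pow, ← norm_mul, ← integral_eval_smul_of_pow hμ (hh.mul hw) hG]
        simp only [mul_smul_comm, Pi.mul_apply, mul_comm]
    _ ≤ (∫ x, ‖h x‖ ^ 2 ∂μ) * ∫ x, ‖p.eval x • w x‖ ^ 2 ∂μ := norm_integral_mul_sq_le hh hpw
    _ = (∫ x, ‖h x‖ ^ 2 ∂μ) * ∫ x, (p ^ 2).eval x * ‖w x‖ ^ 2 ∂μ := by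
        simp only [norm_smul, mul_pow, Real.norm_eq_abs, sq_abs, eval_pow]

lemma norm_aeval_mul_norm_sq_le_of_isSumSq (hμ : HasAllMoments μ) (hw : MemLp w ⊤ μ)
    (hh : MemLp h 2 μ) (hG : ∀ k : ℕ, ∫ x, x ^ k • (w x * h x) ∂μ = z ^ k * G) {s : ℝ[X]}
    (hs : IsSumSq s) :
    ‖aeval z s‖ * ‖G‖ ^ 2 ≤ (∫ x, ‖h x‖ ^ 2 ∂μ) * ∫ x, s.eval x * ‖w x‖ ^ 2 ∂μ := by
  have hint (p : ℝ[X]) : Integrable (fun x => p.eval x * ‖w x‖ ^ 2) μ := by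
    have hw2 : MemLp (fun x => ‖w x‖ ^ 2) ⊤ μ :=
      (hw.norm.mul (r := ⊤) hw.norm).ae_eq (ae_of_all _ fun x => (sq ‖w x‖).symm)
    exact (hμ.integrable_eval p).mul_of_top_left hw2
  induction hs with
  | zero => simp
  | @sq_add a s _ ih =>
    simp only [eval_add, add_mul]
    rw [integral_add (hint _) (hint _), mul_add]
    calc ‖aeval z (a * a + s)‖ * ‖G‖ ^ 2
        ≤ (‖aeval z a‖ ^ 2 + ‖aeval z s‖) * ‖G‖ ^ 2 := by
          gcongr
          rw [map_add, map_mul, sq, ← norm_mul]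
          exact norm_add_le _ _
      _ ≤ _ := by
          rw [add_mul, ← sq]
          exact add_le_add (norm_aeval_sq_mul_norm_sq_le hμ hw hh hG a) ih

/- `p ↦ p(z) * G` is bounded in the norm of `p * w`, while `hs` and a decomposition into squares
make that norm small without `p(z)` becoming small. -/
lemma eq_zero_of_forall_exists_eval_nonneg (hμ : HasAllMoments μ) (hw : MemLp w ⊤ μ)
    (hh : MemLp h 2 μ) (hG : ∀ k : ℕ, ∫ x, x ^ k • (w x * h x) ∂μ = z ^ k * G)
    (hs : ∀ ε > 0, ∃ s : ℝ[X], (∀ x, 0 ≤ s.eval x) ∧ 1 ≤ ‖aeval z s‖ ∧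
      ∫ x, s.eval x * ‖w x‖ ^ 2 ∂μ ≤ ε) : G = 0 := by
  have hH : 0 ≤ ∫ x, ‖h x‖ ^ 2 ∂μ := integral_nonneg fun x => by positivity
  have hbound : ∀ ε > 0, ‖G‖ ^ 2 ≤ (∫ x, ‖h x‖ ^ 2 ∂μ) * ε := fun ε hε => by
    obtain ⟨s, hpos, hsz, hsε⟩ := hs ε hε
    calc ‖G‖ ^ 2 ≤ ‖aeval z s‖ * ‖G‖ ^ 2 := le_mul_of_one_le_left (sq_nonneg _) hsz
      _ ≤ _ := norm_aeval_mul_norm_sq_le_of_isSumSq hμ hw hh hG (isSumSq_of_eval_nonneg hpos)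
      _ ≤ _ := mul_le_mul_of_nonneg_left hsε hH
  have hlim : Tendsto (fun ε => (∫ x, ‖h x‖ ^ 2 ∂μ) * ε) (𝓝[>] 0) (𝓝 0) :=
    tendsto_nhdsWithin_of_tendsto_nhds (by
      simpa using (continuous_const_mul (∫ x, ‖h x‖ ^ 2 ∂μ)).tendsto 0)
  have hG0 : ‖G‖ ^ 2 ≤ 0 := ge_of_tendsto hlim (eventually_nhdsWithin_of_forall hbound)
  exact norm_eq_zero.1 (pow_eq_zero_iff two_ne_zero |>.1 (hG0.antisymm (sq_nonneg _)))

end Orthogonality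

/-! ### Totality of the monomials with exponents at least `0` or `1` -/

section Resolvent

variable {μ : Measure ℝ} {z : ℂ}

lemma ofReal_sub_ne_zero (hz : z ^ 2 = -1) (x : ℝ) : (x : ℂ) - z ≠ 0 := by
  rw [sub_ne_zero]
  rintro rfl
  have : x ^ 2 = -1 := by exact_mod_cast hz
  linarith [sq_nonneg x]

lemma norm_ofReal_sub_sq (hz : z ^ 2 = -1) (x : ℝ) : ‖(x : ℂ) - z‖ ^ 2 = 1 + x ^ 2 := by
  have hI : z = Complex.I ∨ z = -Complex.I := by
    rw [← sq_eq_sq_iff_eq_or_eq_neg, hz, Complex.I_sq]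
  rw [← Complex.normSq_eq_norm_sq]
  rcases hI with rfl | rfl <;> simp [Complex.normSq_apply] <;> ring

lemma continuous_inv_ofReal_sub (hz : z ^ 2 = -1) : Continuous fun x : ℝ => ((x : ℂ) - z)⁻¹ :=
  Continuous.inv₀ (by fun_prop) (ofReal_sub_ne_zero hz)

lemma norm_inv_ofReal_sub_le_one (hz : z ^ 2 = -1) (x : ℝ) : ‖((x : ℂ) - z)⁻¹‖ ≤ 1 := by
  rw [norm_inv]
  refine inv_le_one_of_one_le₀ ?_
  rw [← one_le_sq_iff₀ (norm_nonneg _), norm_ofReal_sub_sq hz]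
  linarith [sq_nonneg x]

lemma memLp_top_inv_ofReal_sub (hz : z ^ 2 = -1) : MemLp (fun x : ℝ => ((x : ℂ) - z)⁻¹) ⊤ μ :=
  memLp_top_of_bound (continuous_inv_ofReal_sub hz).aestronglyMeasurable 1
    (ae_of_all _ (norm_inv_ofReal_sub_le_one hz))

lemma exists_nonneg_polynomial_integral_mul_norm_inv_sq_le (hmom : HasAllMoments μ)
    (hdet : IsDeterminate μ) (hz : z ^ 2 = -1) {ε : ℝ} (hε : 0 < ε) :
    ∃ s : ℝ[X], (∀ x, 0 ≤ s.eval x) ∧ 1 ≤ ‖aeval z s‖ ∧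
      ∫ x, s.eval x * ‖((x : ℂ) - z)⁻¹‖ ^ 2 ∂μ ≤ ε := by
  have hpos (x : ℝ) : 0 < 1 + x ^ 2 := by positivity
  have hcont : Continuous fun x : ℝ => -(1 + x ^ 2)⁻¹ :=
    (Continuous.inv₀ (by fun_prop) fun x => (hpos x).ne').neg
  have hbound (x : ℝ) : |-(1 + x ^ 2)⁻¹| ≤ 1 := by
    rw [abs_neg, abs_of_pos (inv_pos.2 (hpos x))]
    exact inv_le_one_of_one_le₀ (by linarith [sq_nonneg x])
  obtain ⟨q, hq, hlt⟩ := exists_polynomial_majorant_integral_lt hmom hdet hcont hbound hε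
  have heval (x : ℝ) :
      (1 + (1 + X ^ 2) * q).eval x = (1 + x ^ 2) * (q.eval x - -(1 + x ^ 2)⁻¹) := by
    have := (hpos x).ne'
    simp only [eval_add, eval_one, eval_mul, eval_pow, eval_X]
    field_simp
    ring
  refine ⟨1 + (1 + X ^ 2) * q, fun x => ?_, by simp [hz], ?_⟩
  · rw [heval]
    exact mul_nonneg (hpos x).le (sub_nonneg.2 (hq x))
  · have hcancel (x : ℝ) : (1 + (1 + X ^ 2) * q).eval x * ‖((x : ℂ) - z)⁻¹‖ ^ 2 =
        q.eval x - -(1 + x ^ 2)⁻¹ := by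
      rw [heval, norm_inv, inv_pow, norm_ofReal_sub_sq hz, mul_comm,
        inv_mul_cancel_left₀ (hpos x).ne']
    simp only [hcancel]
    rw [integral_sub (hmom.integrable_eval q)
      (polyGrowth.integrable hmom ⟨_, polyGrowth.mem_of_bounded hcont hbound⟩)]
    exact (sub_lt_iff_lt_add'.2 hlt).le

lemma IsOrthogonalToMonomials.inv_ofReal_sub_mul (hmom : HasAllMoments μ) (hdet : IsDeterminate μ)
    (hz : z ^ 2 = -1) {h : ℝ → ℂ} (hh : IsOrthogonalToMonomials μ 0 h) :
    IsOrthogonalToMonomials μ 0 fun x => ((x : ℂ) - z)⁻¹ * h x := by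
  have hmem : MemLp (fun x : ℝ => ((x : ℂ) - z)⁻¹ * h x) 2 μ :=
    hh.memLp.mul (memLp_top_inv_ofReal_sub hz)
  have hmoment (k : ℕ) : ∫ x : ℝ, x ^ k • (((x : ℂ) - z)⁻¹ * h x) ∂μ =
      z ^ k * ∫ x : ℝ, ((x : ℂ) - z)⁻¹ * h x ∂μ := by
    induction k with
    | zero => simp
    | succ k ih =>
      have hsplit (x : ℝ) : x ^ (k + 1) • (((x : ℂ) - z)⁻¹ * h x) =
          x ^ k • h x + z * x ^ k • (((x : ℂ) - z)⁻¹ * h x) := by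
        have := ofReal_sub_ne_zero hz x
        simp only [Complex.real_smul, Complex.ofReal_pow]
        field_simp
        ring
      simp only [hsplit]
      rw [integral_add (hmom.integrable_pow_smul hh.memLp k)
        ((hmom.integrable_pow_smul hmem k).const_mul z), hh.integral_pow_smul k k.zero_le,
        integral_const_mul, ih]
      ring
  have hzero := eq_zero_of_forall_exists_eval_nonneg hmom (memLp_top_inv_ofReal_sub hz) hh.memLp
    hmoment fun ε hε => exists_nonneg_polynomial_integral_mul_norm_inv_sq_le hmom hdet hz hε
  exact ⟨hmem, fun k _ => by rw [hmoment, hzero, mul_zero]⟩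

end Resolvent

section Density

open BoundedContinuousFunction

lemma ae_eq_zero_of_forall_integral_smul_eq_zero {𝕜 α : Type*} [RCLike 𝕜] [TopologicalSpace α]
    [PolishSpace α] [MeasurableSpace α] [BorelSpace α] {μ : Measure α} {h : α → ℝ}
    (hh : Integrable h μ) {A : StarSubalgebra 𝕜 (α →ᵇ 𝕜)}
    (hA : (A.map (toContinuousMapStarₐ 𝕜)).SeparatesPoints)
    (horth : ∀ g ∈ A, ∫ x, h x • g x ∂μ = 0) : h =ᵐ[μ] 0 := by
  have hdensity (g : α →ᵇ 𝕜) (f : α → ℝ) (hf : Integrable f μ) :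
      ∫ x, g x ∂μ.withDensity (fun x => ENNReal.ofReal (f x)) = ∫ x, max (f x) 0 • g x ∂μ := by
    rw [integral_withDensity_eq_integral_toReal_smul₀ hf.1.aemeasurable.ennreal_ofReal (by simp)]
    simp only [ENNReal.toReal_ofReal']
  have hint (g : α →ᵇ 𝕜) (f : α → ℝ) (hf : Integrable f μ) :
      Integrable (fun x => max (f x) 0 • g x) μ :=
    hf.pos_part.smul_bdd _ g.continuous.aestronglyMeasurable (ae_of_all _ g.norm_coe_le_norm)
  have hfinite := isFiniteMeasure_withDensity_ofReal hh.2
  have hfinite' := isFiniteMeasure_withDensity_ofReal hh.neg.2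
  have hpos_neg : μ.withDensity (fun x => ENNReal.ofReal (h x)) =
      μ.withDensity (fun x => ENNReal.ofReal ((-h) x)) := by
    refine ext_of_forall_mem_subalgebra_integral_eq_of_polish hA fun g hg => ?_
    rw [hdensity g h hh, hdensity g (-h) hh.neg, ← sub_eq_zero,
      ← integral_sub (hint g h hh) (hint g (-h) hh.neg), ← horth g hg]
    simp only [← sub_smul, Pi.neg_apply, max_zero_sub_max_neg_zero_eq_self]
  have hdens_eq := (withDensity_eq_iff hh.1.aemeasurable.ennreal_ofReal
    hh.neg.1.aemeasurable.ennreal_ofReal (hh.lintegral_lt_top).ne).1 hpos_neg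
  filter_upwards [hdens_eq] with x hx
  have hmax := congrArg ENNReal.toReal hx
  rw [ENNReal.toReal_ofReal', ENNReal.toReal_ofReal', Pi.neg_apply, ← sub_eq_zero,
    max_zero_sub_max_neg_zero_eq_self] at hmax
  exact hmax

variable {μ : Measure ℝ}

/-- The bounded continuous functions which, together with their conjugates, preserve orthogonality
to the monomials of degree at least `n` under multiplication. -/
def multiplierSubalgebra (hμ : HasAllMoments μ) (n : ℕ) : StarSubalgebra ℂ (ℝ →ᵇ ℂ) where
  carrier := {a | ∀ h : ℝ → ℂ, IsOrthogonalToMonomials μ n h →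
    IsOrthogonalToMonomials μ n (fun x => a x * h x) ∧
      IsOrthogonalToMonomials μ n (fun x => star (a x) * h x)}
  mul_mem' ha hb h hh := by
    refine ⟨?_, ?_⟩
    · simpa [mul_assoc] using (ha _ (hb h hh).1).1
    · simpa [mul_assoc] using (ha _ (hb h hh).2).2
  add_mem' ha hb h hh := by
    refine ⟨?_, ?_⟩
    · simpa [add_mul] using (ha h hh).1.add hμ (hb h hh).1
    · simpa [add_mul] using (ha h hh).2.add hμ (hb h hh).2
  algebraMap_mem' c h hh := by
    refine ⟨?_, ?_⟩
    · simpa using hh.const_mul c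
    · simpa using hh.const_mul (star c)
  star_mem' ha h hh := ⟨by simpa using (ha h hh).2, by simpa using (ha h hh).1⟩

lemma separatesPoints_multiplierSubalgebra (hmom : HasAllMoments μ) (hdet : IsDeterminate μ) :
    ((multiplierSubalgebra hmom 0).map (toContinuousMapStarₐ ℂ)).SeparatesPoints := by
  let r : ℝ →ᵇ ℂ := ofNormedAddCommGroup _ (continuous_inv_ofReal_sub Complex.I_sq) 1
    (norm_inv_ofReal_sub_le_one Complex.I_sq)
  have hconj : (-Complex.I) ^ 2 = -1 := by rw [neg_sq, Complex.I_sq]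
  have hr : r ∈ multiplierSubalgebra hmom 0 := fun h hh =>
    ⟨hh.inv_ofReal_sub_mul hmom hdet Complex.I_sq, by
      simpa [r] using hh.inv_ofReal_sub_mul hmom hdet hconj⟩
  refine fun x y hxy => ⟨r, ⟨toContinuousMapStarₐ ℂ r, ⟨r, hr, rfl⟩, rfl⟩, fun heq => hxy ?_⟩
  exact Complex.ofReal_injective (sub_left_injective (inv_injective heq))

end Density

/-- `x ^ n, x ^ (n + 1), …` is total in the real `L²(μ)`. -/
def MonomialsTotal (μ : Measure ℝ) (n : ℕ) : Prop :=
  ∀ h : ℝ → ℝ, IsOrthogonalToMonomials μ n h → h =ᵐ[μ] 0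

section Total

variable {μ : Measure ℝ}

theorem monomialsTotal_zero (hmom : HasAllMoments μ) (hdet : IsDeterminate μ) :
    MonomialsTotal μ 0 := fun h hh => by
  have hcomplex : IsOrthogonalToMonomials μ 0 fun x => (h x : ℂ) := ⟨hh.memLp.ofReal, fun k hk => by
    simpa [← Complex.ofReal_pow, ← Complex.ofReal_mul, integral_complex_ofReal]
      using hh.integral_pow_smul k hk⟩
  have hint : Integrable h μ := by simpa using hmom.integrable_pow_smul hh.memLp 0
  refine ae_eq_zero_of_forall_integral_smul_eq_zero hint
    (separatesPoints_multiplierSubalgebra hmom hdet) fun g hg => ?_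
  simpa [mul_comm] using (hg _ hcomplex).1.integral_pow_smul 0 le_rfl

/-- The continuous tent of height `1` at the origin, supported in `|x| ≤ 1 / k` if
`k ≠ 0`. -/
def tent (k : ℕ) (x : ℝ) : ℝ := max 0 (1 - k * |x|)

lemma continuous_tent (k : ℕ) : Continuous (tent k) := by unfold tent; fun_prop

lemma tent_nonneg (k : ℕ) (x : ℝ) : 0 ≤ tent k x := le_max_left _ _

lemma abs_tent_le_one (k : ℕ) (x : ℝ) : |tent k x| ≤ 1 := by
  rw [abs_of_nonneg (tent_nonneg k x)]
  exact max_le zero_le_one (sub_le_self _ (by positivity))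

lemma tendsto_tent {x : ℝ} (hx : x ≠ 0) : Tendsto (fun k => tent k x) atTop (𝓝 0) := by
  have hlarge := (tendsto_natCast_atTop_atTop (R := ℝ)).atTop_mul_const (abs_pos.2 hx)
  refine tendsto_const_nhds.congr' ?_
  filter_upwards [hlarge.eventually_ge_atTop 1] with k hk
  exact (max_eq_left (by linarith)).symm

lemma tendsto_integral_tent [IsFiniteMeasure μ] (hmass : μ {0} = 0) :
    Tendsto (fun k => ∫ x, tent k x ∂μ) atTop (𝓝 0) := by
  rw [← integral_zero ℝ ℝ (μ := μ)]
  refine tendsto_integral_of_dominated_convergence (fun _ => 1)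
    (fun k => (continuous_tent k).aestronglyMeasurable) (integrable_const 1)
    (fun k => ae_of_all _ (abs_tent_le_one k)) ?_
  filter_upwards [compl_mem_ae_iff.2 hmass] with x hx using tendsto_tent hx

lemma exists_nonneg_polynomial_one_le_eval_zero_integral_le (hmom : HasAllMoments μ)
    (hdet : IsDeterminate μ) (hmass : μ {0} = 0) {ε : ℝ} (hε : 0 < ε) :
    ∃ s : ℝ[X], (∀ x, 0 ≤ s.eval x) ∧ 1 ≤ s.eval 0 ∧ ∫ x, s.eval x ∂μ ≤ ε := by
  have := hmom.isFiniteMeasure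
  obtain ⟨k, hk⟩ := ((tendsto_integral_tent hmass).eventually_lt_const (half_pos hε)).exists
  obtain ⟨q, hq, hlt⟩ := exists_polynomial_majorant_integral_lt hmom hdet
    (continuous_tent k) (abs_tent_le_one k) (half_pos hε)
  exact ⟨q, fun x => (tent_nonneg k x).trans (hq x), by simpa [tent] using hq 0, by linarith⟩

theorem monomialsTotal_one (hmom : HasAllMoments μ) (hdet : IsDeterminate μ) (hmass : μ {0} = 0) :
    MonomialsTotal μ 1 := fun h hh => by
  have hmoment (k : ℕ) : ∫ x, x ^ k • (1 * h x) ∂μ = 0 ^ k * ∫ x, h x ∂μ := by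
    rcases Nat.eq_zero_or_pos k with rfl | hk
    · simp
    · simpa [hk.ne'] using hh.integral_pow_smul k hk
  have hzero : ∫ x, h x ∂μ = 0 :=
    eq_zero_of_forall_exists_eval_nonneg hmom (memLp_top_const 1) hh.memLp hmoment fun ε hε => by
      obtain ⟨s, hs, hs0, hsε⟩ :=
        exists_nonneg_polynomial_one_le_eval_zero_integral_le hmom hdet hmass hε
      refine ⟨s, hs, ?_, by simpa using hsε⟩
      rw [coe_aeval_eq_eval]
      exact hs0.trans (le_abs_self _)
  refine monomialsTotal_zero hmom hdet h ⟨hh.memLp, fun k _ => ?_⟩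
  simpa [hzero] using hmoment k

end Total

/-! ### Triangular operators with a rank-two skew part -/

section Triangular

open scoped InnerProductSpace

variable {ι V E F : Type*} [AddCommGroup V] [Module ℝ V] [NormedAddCommGroup E]
  [InnerProductSpace ℝ E] [SeminormedAddCommGroup F] [NormedSpace ℝ F]

lemma norm_sum_smul_sq_of_orthonormal {e : ι → E} (he : Orthonormal ℝ e) (s : Finset ι)
    (c : ι → ℝ) : ‖∑ i ∈ s, c i • e i‖ ^ 2 = ∑ i ∈ s, c i ^ 2 := by
  rw [← real_inner_self_eq_norm_sq, he.inner_sum]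
  simp only [conj_trivial, sq]

lemma norm_map_le_of_sum_norm_sq_le {J : V →ₗ[ℝ] E} {P : ι → V} (hP : Orthonormal ℝ (J ∘ P))
    (S : V →ₗ[ℝ] F) {M : ℝ} (hM : 0 ≤ M)
    (hS : ∀ s : Finset ι, ∑ i ∈ s, ‖S (P i)‖ ^ 2 ≤ M ^ 2) {p : V}
    (hp : p ∈ Submodule.span ℝ (Set.range P)) : ‖S p‖ ≤ M * ‖J p‖ := by
  obtain ⟨c, rfl⟩ := Finsupp.mem_span_range_iff_exists_finsupp.1 hp
  have hJ : ‖J (c.sum fun i a => a • P i)‖ ^ 2 = ∑ i ∈ c.support, c i ^ 2 := by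
    simpa [Finsupp.sum] using norm_sum_smul_sq_of_orthonormal hP c.support c
  refine le_of_sq_le_sq ?_ (by positivity)
  calc ‖S (c.sum fun i a => a • P i)‖ ^ 2
      ≤ (∑ i ∈ c.support, |c i| * ‖S (P i)‖) ^ 2 := by
        gcongr
        simpa [Finsupp.sum, norm_smul] using norm_sum_le c.support fun i => c i • S (P i)
    _ ≤ (∑ i ∈ c.support, |c i| ^ 2) * ∑ i ∈ c.support, ‖S (P i)‖ ^ 2 :=
        Finset.sum_mul_sq_le_sq_mul_sq _ _ _
    _ ≤ (∑ i ∈ c.support, |c i| ^ 2) * M ^ 2 := by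
        gcongr
        exact hS _
    _ = (M * ‖J (c.sum fun i a => a • P i)‖) ^ 2 := by
        simp only [sq_abs, mul_pow, hJ, mul_comm]

lemma inner_eq_zero_of_mem_span_image_Iio [Preorder ι] {J : V →ₗ[ℝ] E} {P : ι → V}
    (hP : Orthonormal ℝ (J ∘ P)) {i : ι} {p : V} (hp : p ∈ Submodule.span ℝ (P '' Set.Iio i)) :
    ⟪J p, J (P i)⟫_ℝ = 0 := by
  induction hp using Submodule.span_induction with
  | mem p hp =>
    obtain ⟨j, hj, rfl⟩ := hp
    exact hP.2 (ne_of_lt hj)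
  | zero => simp
  | add p q _ _ hp hq => rw [map_add, inner_add_left, hp, hq, add_zero]
  | smul c p _ hp => rw [map_smul, inner_smul_left, hp, mul_zero]

lemma sum_inner_sq_le {e : ι → E} (he : Orthonormal ℝ e) (x : E) (s : Finset ι) :
    ∑ i ∈ s, ⟪e i, x⟫_ℝ ^ 2 ≤ ‖x‖ ^ 2 := by
  simpa only [Real.norm_eq_abs, sq_abs] using he.sum_inner_products_le x (s := s)

variable {J : V →ₗ[ℝ] E} {T : V →ₗ[ℝ] V} {P v : ℕ → V} {a b : E}

/- Below the diagonal the skew identity determines the coefficients of `T (P n)`, because there the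
other half of the commutator vanishes. -/
lemma norm_sq_map_le_of_skew (hP : Orthonormal ℝ (J ∘ P))
    (hT : ∀ n, T (P n) ∈ Submodule.span ℝ (P '' Set.Iio n))
    (hskew : ∀ p q, ⟪J p, J (T q)⟫_ℝ - ⟪J (T p), J q⟫_ℝ =
      ⟪J p, a⟫_ℝ * ⟪J q, b⟫_ℝ - ⟪J p, b⟫_ℝ * ⟪J q, a⟫_ℝ) (n : ℕ) :
    ‖J (T (P n))‖ ^ 2 ≤
      2 * ‖a‖ ^ 2 * ⟪J (P n), b⟫_ℝ ^ 2 + 2 * ‖b‖ ^ 2 * ⟪J (P n), a⟫_ℝ ^ 2 := by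
  have hmem := hT n
  rw [← Finset.coe_range, Submodule.mem_span_image_finset_iff_exists_fun'] at hmem
  obtain ⟨c, hc⟩ := hmem
  have hsum : J (T (P n)) = ∑ k ∈ Finset.range n, c k • (J ∘ P) k := by
    rw [← hc, map_sum]
    simp only [map_smul, Function.comp_apply]
  have hcoeff : ∀ k ∈ Finset.range n,
      c k = ⟪J (P k), a⟫_ℝ * ⟪J (P n), b⟫_ℝ - ⟪J (P k), b⟫_ℝ * ⟪J (P n), a⟫_ℝ := fun k hk => by
    have hlow := Submodule.span_mono (Set.image_mono
      (Set.Iio_subset_Iio (Finset.mem_range.1 hk).le)) (hT k)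
    rw [← hskew, inner_eq_zero_of_mem_span_image_Iio hP hlow, sub_zero, hsum]
    exact (hP.inner_right_sum c hk).symm
  rw [hsum, norm_sum_smul_sq_of_orthonormal hP]
  calc ∑ k ∈ Finset.range n, c k ^ 2
      ≤ ∑ k ∈ Finset.range n, (2 * ⟪J (P n), b⟫_ℝ ^ 2 * ⟪J (P k), a⟫_ℝ ^ 2 +
          2 * ⟪J (P n), a⟫_ℝ ^ 2 * ⟪J (P k), b⟫_ℝ ^ 2) := by
        refine Finset.sum_le_sum fun k hk => ?_
        rw [hcoeff k hk]
        linarith [sq_nonneg (⟪J (P k), a⟫_ℝ * ⟪J (P n), b⟫_ℝ + ⟪J (P k), b⟫_ℝ * ⟪J (P n), a⟫_ℝ)]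
    _ = 2 * ⟪J (P n), b⟫_ℝ ^ 2 * ∑ k ∈ Finset.range n, ⟪J (P k), a⟫_ℝ ^ 2 +
          2 * ⟪J (P n), a⟫_ℝ ^ 2 * ∑ k ∈ Finset.range n, ⟪J (P k), b⟫_ℝ ^ 2 := by
        rw [Finset.sum_add_distrib, Finset.mul_sum, Finset.mul_sum]
    _ ≤ 2 * ⟪J (P n), b⟫_ℝ ^ 2 * ‖a‖ ^ 2 + 2 * ⟪J (P n), a⟫_ℝ ^ 2 * ‖b‖ ^ 2 := by
        gcongr <;> exact sum_inner_sq_le hP _ _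
    _ = _ := by ring

lemma norm_map_le_of_orthonormal_of_skew (hP : Orthonormal ℝ (J ∘ P))
    (hT : ∀ n, T (P n) ∈ Submodule.span ℝ (P '' Set.Iio n))
    (hskew : ∀ p q, ⟪J p, J (T q)⟫_ℝ - ⟪J (T p), J q⟫_ℝ =
      ⟪J p, a⟫_ℝ * ⟪J q, b⟫_ℝ - ⟪J p, b⟫_ℝ * ⟪J q, a⟫_ℝ)
    {p : V} (hp : p ∈ Submodule.span ℝ (Set.range P)) :
    ‖J (T p)‖ ≤ 2 * ‖a‖ * ‖b‖ * ‖J p‖ := by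
  refine norm_map_le_of_sum_norm_sq_le hP (J ∘ₗ T) (by positivity) (fun s => ?_) hp
  calc ∑ n ∈ s, ‖J (T (P n))‖ ^ 2
      ≤ ∑ n ∈ s, (2 * ‖a‖ ^ 2 * ⟪J (P n), b⟫_ℝ ^ 2 + 2 * ‖b‖ ^ 2 * ⟪J (P n), a⟫_ℝ ^ 2) :=
        Finset.sum_le_sum fun n _ => norm_sq_map_le_of_skew hP hT hskew n
    _ = 2 * ‖a‖ ^ 2 * ∑ n ∈ s, ⟪J (P n), b⟫_ℝ ^ 2 +
          2 * ‖b‖ ^ 2 * ∑ n ∈ s, ⟪J (P n), a⟫_ℝ ^ 2 := by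
        rw [Finset.sum_add_distrib, Finset.mul_sum, Finset.mul_sum]
    _ ≤ 2 * ‖a‖ ^ 2 * ‖b‖ ^ 2 + 2 * ‖b‖ ^ 2 * ‖a‖ ^ 2 := by
        gcongr <;> exact sum_inner_sq_le hP _ _
    _ = (2 * ‖a‖ * ‖b‖) ^ 2 := by ring

lemma exists_orthonormal_span_image_Iio_eq (hJ : Function.Injective J)
    (hv : LinearIndependent ℝ v) :
    ∃ P : ℕ → V, Orthonormal ℝ (J ∘ P) ∧
      ∀ n, Submodule.span ℝ (P '' Set.Iio n) = Submodule.span ℝ (v '' Set.Iio n) := by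
  let e := InnerProductSpace.gramSchmidtNormed ℝ (J ∘ v)
  have he : Orthonormal ℝ e :=
    InnerProductSpace.gramSchmidtNormed_orthonormal (hv.map' J (LinearMap.ker_eq_bot.2 hJ))
  have hrange (n : ℕ) : e n ∈ LinearMap.range J := by
    have hspan : Submodule.span ℝ (Set.range (J ∘ v)) ≤ LinearMap.range J :=
      Submodule.span_le.2 (Set.range_comp_subset_range v J)
    rw [← InnerProductSpace.span_gramSchmidt,
      ← InnerProductSpace.span_gramSchmidtNormed_range] at hspan
    exact hspan (Submodule.subset_span ⟨n, rfl⟩)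
  choose P hP using hrange
  have hPe : J ∘ P = e := funext hP
  refine ⟨P, hPe ▸ he, fun n => Submodule.map_injective_of_injective hJ ?_⟩
  rw [Submodule.map_span, Submodule.map_span, ← Set.image_comp, ← Set.image_comp, hPe,
    InnerProductSpace.span_gramSchmidtNormed, InnerProductSpace.span_gramSchmidt_Iio]

lemma map_mem_span_image_Iio (hT : ∀ n, T (v n) ∈ Submodule.span ℝ (v '' Set.Iio n)) {n : ℕ}
    {p : V} (hp : p ∈ Submodule.span ℝ (v '' Set.Iio (n + 1))) :
    T p ∈ Submodule.span ℝ (v '' Set.Iio n) := by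
  suffices Submodule.span ℝ (v '' Set.Iio (n + 1)) ≤
      (Submodule.span ℝ (v '' Set.Iio n)).comap T from this hp
  rw [Submodule.span_le]
  rintro _ ⟨k, hk, rfl⟩
  exact Submodule.span_mono (Set.image_mono (Set.Iio_subset_Iio (Nat.lt_succ_iff.1 hk))) (hT k)

theorem norm_map_le_of_skew (hJ : Function.Injective J) (v : Module.Basis ℕ ℝ V)
    (hT : ∀ n, T (v n) ∈ Submodule.span ℝ (v '' Set.Iio n))
    (hskew : ∀ p q, ⟪J p, J (T q)⟫_ℝ - ⟪J (T p), J q⟫_ℝ =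
      ⟪J p, a⟫_ℝ * ⟪J q, b⟫_ℝ - ⟪J p, b⟫_ℝ * ⟪J q, a⟫_ℝ) (p : V) :
    ‖J (T p)‖ ≤ 2 * ‖a‖ * ‖b‖ * ‖J p‖ := by
  obtain ⟨P, hP, hspan⟩ := exists_orthonormal_span_image_Iio_eq hJ v.linearIndependent
  have hTP (n : ℕ) : T (P n) ∈ Submodule.span ℝ (P '' Set.Iio n) := by
    have hPn : P n ∈ Submodule.span ℝ (P '' Set.Iio (n + 1)) :=
      Submodule.subset_span ⟨n, n.lt_succ_self, rfl⟩
    rw [hspan] at hPn ⊢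
    exact map_mem_span_image_Iio hT hPn
  have hrange (w : ℕ → V) : Set.range w = ⋃ n, w '' Set.Iio n := by
    rw [← Set.image_iUnion, Set.iUnion_Iio, Set.image_univ]
  have htop : Submodule.span ℝ (Set.range P) = ⊤ := by
    rw [hrange, Submodule.span_iUnion, iSup_congr hspan, ← Submodule.span_iUnion, ← hrange,
      v.span_eq]
  exact norm_map_le_of_orthonormal_of_skew hP hTP hskew (htop ▸ Submodule.mem_top)

end Triangular

section DivX

open scoped InnerProductSpace

/-- `Polynomial.divX`, that is `p ↦ (p - p(0)) / X`, as a linear map. -/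
def divXLinearMap : ℝ[X] →ₗ[ℝ] ℝ[X] where
  toFun := divX
  map_add' _ _ := divX_add
  map_smul' c p := by simp only [smul_eq_C_mul, divX_C_mul, RingHom.id_apply]

lemma divX_monomial_mem_span (n : ℕ) :
    divXLinearMap (basisMonomials ℝ n) ∈ Submodule.span ℝ (basisMonomials ℝ '' Set.Iio n) := by
  simp only [coe_basisMonomials, ← C_mul_X_pow_eq_monomial, divXLinearMap, LinearMap.coe_mk,
    AddHom.coe_mk, divX_C_mul_X_pow]
  split_ifs with hn
  · exact zero_mem _
  · exact Submodule.subset_span ⟨n - 1, Nat.sub_one_lt hn, rfl⟩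

variable {E : Type*} [NormedAddCommGroup E] [InnerProductSpace ℝ E] {J : ℝ[X] →ₗ[ℝ] E}
  {a : E}

lemma map_X_mul_divX (J : ℝ[X] →ₗ[ℝ] E) (p : ℝ[X]) :
    J (X * p.divX) = J p - p.eval 0 • J 1 := by
  rw [← map_smul, ← map_sub, smul_eq_C_mul, mul_one, ← coeff_zero_eq_eval_zero]
  congr 1
  exact eq_sub_of_add_eq p.X_mul_divX_add

theorem exists_norm_divX_le (hJ : Function.Injective J)
    (hsymm : ∀ p q, ⟪J (X * p), J q⟫_ℝ = ⟪J p, J (X * q)⟫_ℝ) (ha : ∀ p, p.eval 0 = ⟪J p, a⟫_ℝ)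
    {w : E} (hw : ∀ p, ⟪J 1, J p⟫_ℝ = ⟪w, J (X * p)⟫_ℝ) :
    ∃ K ≥ 0, ∀ p, ‖J p.divX‖ ≤ K * ‖J p‖ := by
  set b := w - ⟪w, J 1⟫_ℝ • a with hb
  have hΛ (p : ℝ[X]) : ⟪J 1, J p.divX⟫_ℝ = ⟪J p, b⟫_ℝ := by
    rw [hw, map_X_mul_divX, ha, hb]
    simp only [inner_sub_right, inner_smul_right, real_inner_comm w]
    ring
  have hsplit (p q : ℝ[X]) : ⟪J (X * p.divX), J q⟫_ℝ = ⟪J p, J q⟫_ℝ - p.eval 0 * ⟪J 1, J q⟫_ℝ := by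
    rw [map_X_mul_divX, inner_sub_left, real_inner_smul_left]
  refine ⟨2 * ‖a‖ * ‖b‖, by positivity, norm_map_le_of_skew (T := divXLinearMap) hJ
    (basisMonomials ℝ) divX_monomial_mem_span fun p q => ?_⟩
  change ⟪J p, J q.divX⟫_ℝ - ⟪J p.divX, J q⟫_ℝ = _
  have hcomm : ⟪J (X * p.divX), J q.divX⟫_ℝ = ⟪J (X * q.divX), J p.divX⟫_ℝ := by
    rw [hsymm, real_inner_comm]
  rw [hsplit, hsplit, hΛ, hΛ, ha, ha, real_inner_comm (J p.divX) (J q)] at hcomm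
  linarith

lemma norm_le_mul_norm_of_inner_map_X_mul {K : ℝ} (hK0 : 0 ≤ K)
    (hK : ∀ p, ‖J p.divX‖ ≤ K * ‖J p‖) (hdense : DenseRange J)
    (ha : ∀ p, p.eval 0 = ⟪J p, a⟫_ℝ) {F G : E} (hFG : ∀ p, ⟪J (X * p), F⟫_ℝ = ⟪J p, G⟫_ℝ)
    (hF : ⟪F, a⟫_ℝ = 0) : ‖F‖ ≤ K * ‖G‖ := by
  have hbound (u : E) : ⟪u, F⟫_ℝ - ⟪u, a⟫_ℝ * ⟪J 1, F⟫_ℝ ≤ K * ‖u‖ * ‖G‖ := by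
    refine hdense.induction_on u (isClosed_le (by fun_prop) (by fun_prop)) fun p => ?_
    calc ⟪J p, F⟫_ℝ - ⟪J p, a⟫_ℝ * ⟪J 1, F⟫_ℝ = ⟪J p.divX, G⟫_ℝ := by
          rw [← hFG, map_X_mul_divX, inner_sub_left, real_inner_smul_left, ha]
      _ ≤ ‖J p.divX‖ * ‖G‖ := real_inner_le_norm _ _
      _ ≤ K * ‖J p‖ * ‖G‖ := by
          gcongr
          exact hK p
  rcases eq_or_ne F 0 with rfl | hF0
  · simpa using mul_nonneg hK0 (norm_nonneg G)
  · have hself := hbound F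
    rw [hF, zero_mul, sub_zero, real_inner_self_eq_norm_sq, sq] at hself
    exact le_of_mul_le_mul_left (by linarith) (norm_pos_iff.2 hF0)

end DivX

/-! ### Evaluation at the origin is unbounded -/

section PolynomialsInL2

open scoped InnerProductSpace

lemma inner_toLp_toLp {α : Type*} [MeasurableSpace α] {μ : Measure α} {f g : α → ℝ}
    (hf : MemLp f 2 μ) (hg : MemLp g 2 μ) :
    ⟪hf.toLp f, hg.toLp g⟫_ℝ = ∫ x, f x * g x ∂μ := by
  rw [L2.inner_def]
  refine integral_congr_ae ?_
  filter_upwards [hf.coeFn_toLp, hg.coeFn_toLp] with x hfx hgx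
  rw [hfx, hgx, real_inner_eq_re_inner, RCLike.inner_apply, conj_trivial, mul_comm]
  rfl

variable {μ : Measure ℝ} {n : ℕ}

/-- The linear map sending a polynomial `p` to the class of `x ^ n * p x` in `L²(μ)`. -/
def HasAllMoments.powMulLp (hμ : HasAllMoments μ) (n : ℕ) : ℝ[X] →ₗ[ℝ] Lp ℝ 2 μ where
  toFun p := (hμ.memLp_eval (X ^ n * p)).toLp _
  map_add' p q := by
    rw [← MemLp.toLp_add]
    exact MemLp.toLp_congr _ _ (ae_of_all _ fun x => by simp [mul_add])
  map_smul' c p := by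
    rw [RingHom.id_apply, ← MemLp.toLp_const_smul]
    exact MemLp.toLp_congr _ _ (ae_of_all _ fun x => by simp)

lemma inner_powMulLp_toLp (hμ : HasAllMoments μ) (p : ℝ[X]) {f : ℝ → ℝ} (hf : MemLp f 2 μ) :
    ⟪hμ.powMulLp n p, hf.toLp f⟫_ℝ = ∫ x, x ^ n * p.eval x * f x ∂μ := by
  refine (inner_toLp_toLp (hμ.memLp_eval _) hf).trans ?_
  simp only [eval_mul, eval_pow, eval_X]

lemma inner_powMulLp (hμ : HasAllMoments μ) (m : ℕ) (p q : ℝ[X]) :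
    ⟪hμ.powMulLp n p, hμ.powMulLp m q⟫_ℝ = ∫ x, x ^ (n + m) * (p * q).eval x ∂μ := by
  refine (inner_toLp_toLp (hμ.memLp_eval _) (hμ.memLp_eval _)).trans ?_
  simp only [eval_mul, eval_pow, eval_X, pow_add]
  congr! 2 with x
  ring

lemma powMulLp_X_mul (hμ : HasAllMoments μ) (p : ℝ[X]) :
    hμ.powMulLp n (X * p) = hμ.powMulLp (n + 1) p :=
  MemLp.toLp_congr (hμ.memLp_eval _) (hμ.memLp_eval _) <| ae_of_all _ fun x => by
    rw [← mul_assoc, ← pow_succ]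

lemma IsOrthogonalToMonomials.inner_powMulLp_eq_zero (hμ : HasAllMoments μ) {h : ℝ → ℝ}
    (hh : IsOrthogonalToMonomials μ n h) (p : ℝ[X]) :
    ⟪hμ.powMulLp n p, hh.memLp.toLp h⟫_ℝ = 0 := by
  induction p using Polynomial.induction_on' with
  | add p q hp hq => rw [map_add, inner_add_left, hp, hq, add_zero]
  | monomial k c =>
    rw [← mul_one c, ← smul_eq_mul, ← smul_monomial, map_smul, real_inner_smul_left,
      inner_powMulLp_toLp]
    simp only [eval_monomial, one_mul, ← pow_add]
    exact mul_eq_zero_of_right c (hh.integral_pow_smul (n + k) (Nat.le_add_right n k))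

lemma denseRange_powMulLp (hμ : HasAllMoments μ) (htotal : MonomialsTotal μ n) :
    DenseRange (hμ.powMulLp n) := by
  refine Submodule.dense_iff_topologicalClosure_eq_top.2
    ((Submodule.topologicalClosure_eq_top_iff (K := LinearMap.range (hμ.powMulLp n))).2 ?_)
  refine (Submodule.eq_bot_iff _).2 fun u hu => Lp.eq_zero_iff_ae_eq_zero.2 ?_
  refine htotal u ⟨Lp.memLp u, fun k hk => ?_⟩
  have hinner := (Submodule.mem_orthogonal _ u).1 hu _ ⟨X ^ (k - n), rfl⟩
  rw [← Lp.toLp_coeFn u (Lp.memLp u), inner_powMulLp_toLp] at hinner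
  simpa only [eval_pow, eval_X, ← pow_add, smul_eq_mul, Nat.add_sub_cancel' hk] using hinner

end PolynomialsInL2

section NearOrigin

variable {μ : Measure ℝ}

lemma measure_diff_zero_ne_zero (h0 : (0 : ℝ) ∈ mSupp μ) (hmass : μ {0} = 0) {U : Set ℝ}
    (hU : U ∈ 𝓝 0) : μ (U \ {0}) ≠ 0 := by
  rw [measure_sdiff_null hmass]
  exact h0 U hU

lemma powMulLp_injective (hμ : HasAllMoments μ) (h0 : (0 : ℝ) ∈ mSupp μ) (hmass : μ {0} = 0)
    (n : ℕ) : Function.Injective (hμ.powMulLp n) := by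
  refine (injective_iff_map_eq_zero _).2 fun p hp => ?_
  by_contra hp0
  have hvanish : ∀ᵐ x ∂μ, (X ^ n * p).eval x = 0 :=
    (hμ.memLp_eval (X ^ n * p)).coeFn_toLp.symm.trans (Lp.eq_zero_iff_ae_eq_zero.1 hp)
  have hroots : ((X ^ n * p).rootSet ℝ \ {0})ᶜ ∈ 𝓝 0 :=
    ((rootSet_finite _ ℝ).sdiff.isClosed.isOpen_compl).mem_nhds (by simp)
  refine measure_diff_zero_ne_zero h0 hmass hroots (measure_mono_null (fun x hx => ?_) hvanish)
  have hne : X ^ n * p ≠ 0 := mul_ne_zero (pow_ne_zero n X_ne_zero) hp0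
  exact fun hx0 => hx.1 ⟨mem_rootSet.2 ⟨hne, by simpa using hx0⟩, hx.2⟩

lemma exists_measure_inter_ne_zero_measure_diff_ne_zero (h0 : (0 : ℝ) ∈ mSupp μ)
    (hmass : μ {0} = 0) {U : Set ℝ} (hU : U ∈ 𝓝 0) :
    ∃ B, MeasurableSet B ∧ μ (U ∩ B) ≠ 0 ∧ μ (U \ B) ≠ 0 := by
  obtain ⟨j, hj⟩ : ∃ j : ℕ, μ (U \ Metric.ball 0 (1 / (j + 1))) ≠ 0 := by
    by_contra! hnull
    refine measure_diff_zero_ne_zero h0 hmass hU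
      (measure_mono_null (fun x hx => ?_) (measure_iUnion_null hnull))
    obtain ⟨j, hj⟩ := exists_nat_one_div_lt (abs_pos.2 hx.2)
    exact Set.mem_iUnion.2 ⟨j, hx.1, by simpa using hj.le⟩
  exact ⟨_, measurableSet_ball, h0 _ (inter_mem hU (Metric.ball_mem_nhds 0 (by positivity))), hj⟩

lemma exists_memLp_integral_mul_eq_zero {α : Type*} [MeasurableSpace α] {μ : Measure α}
    [IsFiniteMeasure μ] {S T : Set α} (hS : MeasurableSet S) (hT : MeasurableSet T)
    (hdisj : Disjoint S T) (hS0 : μ S ≠ 0) (hT0 : μ T ≠ 0) {h : α → ℝ} (hh : Integrable h μ) :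
    ∃ f : α → ℝ, MemLp f 2 μ ∧ (∀ x ∉ S ∪ T, f x = 0) ∧ ∫ x, f x * h x ∂μ = 0 ∧ ¬ f =ᵐ[μ] 0 := by
  obtain ⟨a, b, hab, hsum⟩ : ∃ a b : ℝ, (a ≠ 0 ∨ b ≠ 0) ∧
      a * (∫ x in S, h x ∂μ) + b * ∫ x in T, h x ∂μ = 0 := by
    by_cases hz : ∫ x in S, h x ∂μ = 0
    · exact ⟨1, 0, by simp, by simp [hz]⟩
    · exact ⟨∫ x in T, h x ∂μ, -∫ x in S, h x ∂μ, by simp [hz], by ring⟩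
  let f : α → ℝ := S.indicator (fun _ => a) + T.indicator fun _ => b
  have hfS : ∀ x ∈ S, f x = a := fun x hx => by simp [f, hx, hdisj.notMem_of_mem_left hx]
  have hfT : ∀ x ∈ T, f x = b := fun x hx => by simp [f, hx, hdisj.notMem_of_mem_right hx]
  refine ⟨f, ?_, fun x hx => ?_, ?_, fun hf => ?_⟩
  · exact (memLp_indicator_const 2 hS a (Or.inr (measure_ne_top _ _))).add
      (memLp_indicator_const 2 hT b (Or.inr (measure_ne_top _ _)))
  · rw [Set.mem_union, not_or] at hx
    simp [f, hx.1, hx.2]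
  · rw [← hsum, ← integral_indicator hS, ← integral_indicator hT, ← integral_const_mul,
      ← integral_const_mul, ← integral_add ((hh.indicator hS).const_mul a)
        ((hh.indicator hT).const_mul b)]
    congr! 2 with x
    simp only [f, Pi.add_apply, add_mul, ← Set.indicator_mul_left, ← Set.indicator_const_mul]
  · rcases hab with ha | hb
    · exact hS0 (measure_mono_null (fun x hx => by simpa [hfS x hx] using ha) hf)
    · exact hT0 (measure_mono_null (fun x hx => by simpa [hfT x hx] using hb) hf)

lemma exists_memLp_near_zero_integral_mul_eq_zero [IsFiniteMeasure μ] (h0 : (0 : ℝ) ∈ mSupp μ)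
    (hmass : μ {0} = 0) {h : ℝ → ℝ} (hh : Integrable h μ) {δ : ℝ} (hδ : 0 < δ) :
    ∃ f : ℝ → ℝ, MemLp f 2 μ ∧ (∀ x, δ ≤ |x| → f x = 0) ∧ ∫ x, f x * h x ∂μ = 0 ∧
      ¬ f =ᵐ[μ] 0 := by
  obtain ⟨B, hB, hin, hout⟩ :=
    exists_measure_inter_ne_zero_measure_diff_ne_zero h0 hmass (Metric.ball_mem_nhds 0 hδ)
  obtain ⟨f, hf, hsupp, hfh, hf0⟩ := exists_memLp_integral_mul_eq_zero
    (measurableSet_ball.inter hB) (measurableSet_ball.diff hB)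
    (Set.disjoint_sdiff_inter.symm) hin hout hh
  refine ⟨f, hf, fun x hx => hsupp x ?_, hfh, hf0⟩
  rw [Set.inter_union_sdiff]
  simpa using hx

lemma exists_memLp_id_mul_norm_toLp_le {f : ℝ → ℝ} (hf : MemLp f 2 μ) {δ : ℝ}
    (hsupp : ∀ x, δ ≤ |x| → f x = 0) :
    ∃ hxf : MemLp (fun x => x * f x) 2 μ, ‖hxf.toLp _‖ ≤ δ * ‖hf.toLp f‖ := by
  have hbound (x : ℝ) : ‖x * f x‖ ≤ δ * ‖f x‖ := by
    rcases le_or_gt δ |x| with hx | hx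
    · simp [hsupp x hx]
    · rw [norm_mul]
      gcongr
      exact hx.le
  have hxf : MemLp (fun x => x * f x) 2 μ :=
    hf.of_le_mul (aestronglyMeasurable_id.mul hf.1) (ae_of_all _ hbound)
  refine ⟨hxf, Lp.norm_le_mul_norm_of_ae_le_mul ?_⟩
  filter_upwards [hf.coeFn_toLp, hxf.coeFn_toLp] with x hfx hxfx
  rw [hfx, hxfx]
  exact hbound x

end NearOrigin

section Step

open scoped InnerProductSpace

variable {μ : Measure ℝ} {m : ℕ}

/- A representing vector would make division by `x` bounded on its orthogonal complement, which
contains functions concentrated arbitrarily close to the origin. -/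
theorem not_forall_eval_zero_eq_inner (hmom : HasAllMoments μ) (h0 : (0 : ℝ) ∈ mSupp μ)
    (hmass : μ {0} = 0) (htotal : MonomialsTotal μ (m + 1)) (a : Lp ℝ 2 μ) :
    ¬ ∀ p : ℝ[X], p.eval 0 = ⟪hmom.powMulLp (m + 1) p, a⟫_ℝ := fun ha => by
  have := hmom.isFiniteMeasure
  have hsymm (p q : ℝ[X]) : ⟪hmom.powMulLp (m + 1) (X * p), hmom.powMulLp (m + 1) q⟫_ℝ =
      ⟪hmom.powMulLp (m + 1) p, hmom.powMulLp (m + 1) (X * q)⟫_ℝ := by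
    rw [inner_powMulLp, inner_powMulLp, mul_left_comm, mul_assoc]
  have hlower (p : ℝ[X]) : ⟪hmom.powMulLp (m + 1) 1, hmom.powMulLp (m + 1) p⟫_ℝ =
      ⟪hmom.powMulLp m 1, hmom.powMulLp (m + 1) (X * p)⟫_ℝ := by
    rw [powMulLp_X_mul, inner_powMulLp, inner_powMulLp, add_right_comm, add_assoc]
  obtain ⟨K, hK0, hK⟩ :=
    exists_norm_divX_le (powMulLp_injective hmom h0 hmass (m + 1)) hsymm ha hlower
  obtain ⟨f, hf, hsupp, hfa, hf0⟩ := exists_memLp_near_zero_integral_mul_eq_zero h0 hmass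
    ((Lp.memLp a).integrable one_le_two) (δ := (K + 1)⁻¹) (by positivity)
  obtain ⟨hxf, hnorm⟩ := exists_memLp_id_mul_norm_toLp_le hf hsupp
  have hinner (p : ℝ[X]) : ⟪hmom.powMulLp (m + 1) (X * p), hf.toLp f⟫_ℝ =
      ⟪hmom.powMulLp (m + 1) p, hxf.toLp _⟫_ℝ := by
    rw [inner_powMulLp_toLp, inner_powMulLp_toLp]
    simp only [eval_mul, eval_X]
    congr! 2 with x
    ring
  have horth : ⟪hf.toLp f, a⟫_ℝ = 0 := by
    rw [← Lp.toLp_coeFn a (Lp.memLp a), inner_toLp_toLp, hfa]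
  have hle := norm_le_mul_norm_of_inner_map_X_mul hK0 hK (denseRange_powMulLp hmom htotal) ha
    hinner horth
  have hpos : 0 < ‖hf.toLp f‖ :=
    norm_pos_iff.2 fun hF => hf0 (hf.coeFn_toLp.symm.trans (Lp.eq_zero_iff_ae_eq_zero.1 hF))
  have hself : ‖hf.toLp f‖ ≤ K / (K + 1) * ‖hf.toLp f‖ := by
    calc ‖hf.toLp f‖ ≤ K * ‖hxf.toLp _‖ := hle
      _ ≤ K * ((K + 1)⁻¹ * ‖hf.toLp f‖) := by gcongr
      _ = K / (K + 1) * ‖hf.toLp f‖ := by ring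
  have hlt : K / (K + 1) < 1 := (div_lt_one (by positivity)).2 (lt_add_one K)
  exact hself.not_gt (mul_lt_of_lt_one_left hpos hlt)

theorem monomialsTotal_add_two (hmom : HasAllMoments μ) (h0 : (0 : ℝ) ∈ mSupp μ)
    (hmass : μ {0} = 0) (htotal : MonomialsTotal μ (m + 1)) : MonomialsTotal μ (m + 2) :=
  fun h hh => by
  set c := ⟪hmom.powMulLp (m + 1) 1, hh.memLp.toLp h⟫_ℝ with hc
  have heval (p : ℝ[X]) : ⟪hmom.powMulLp (m + 1) p, hh.memLp.toLp h⟫_ℝ = p.eval 0 * c := by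
    have hzero := hh.inner_powMulLp_eq_zero hmom p.divX
    rw [← powMulLp_X_mul, map_X_mul_divX, inner_sub_left, real_inner_smul_left] at hzero
    exact sub_eq_zero.1 hzero
  have hc0 : c = 0 := by
    by_contra hc0
    refine not_forall_eval_zero_eq_inner hmom h0 hmass htotal (c⁻¹ • hh.memLp.toLp h) fun p => ?_
    rw [real_inner_smul_right, heval, mul_comm, mul_inv_cancel_right₀ hc0]
  refine htotal h ⟨hh.memLp, fun k hk => ?_⟩
  rcases hk.eq_or_lt with rfl | hk
  · simpa [hc, inner_powMulLp_toLp] using hc0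
  · exact hh.integral_pow_smul k hk

theorem monomialsTotal (hmom : HasAllMoments μ) (hdet : IsDeterminate μ)
    (h0 : (0 : ℝ) ∈ mSupp μ) (hmass : μ {0} = 0) : ∀ n, MonomialsTotal μ n
  | 0 => monomialsTotal_zero hmom hdet
  | 1 => monomialsTotal_one hmom hdet hmass
  | m + 2 => monomialsTotal_add_two hmom h0 hmass (monomialsTotal hmom hdet h0 hmass (m + 1))

end Step

section ComplexDensity

open scoped InnerProductSpace

variable {μ : Measure ℝ} {n : ℕ}

lemma IsOrthogonalToMonomials.continuousLinearMap_comp {F G : Type*} [NormedAddCommGroup F]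
    [NormedSpace ℝ F] [CompleteSpace F] [NormedAddCommGroup G] [NormedSpace ℝ G] [CompleteSpace G]
    (hμ : HasAllMoments μ) {u : ℝ → F} (hu : IsOrthogonalToMonomials μ n u) (L : F →L[ℝ] G) :
    IsOrthogonalToMonomials μ n fun x => L (u x) where
  memLp := L.comp_memLp' hu.memLp
  integral_pow_smul k hk := by
    simp only [← map_smul]
    rw [L.integral_comp_comm (hμ.integrable_pow_smul hu.memLp k), hu.integral_pow_smul k hk,
      map_zero]

lemma MonomialsTotal.ae_eq_zero_of_complex (htotal : MonomialsTotal μ n) (hμ : HasAllMoments μ)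
    {u : ℝ → ℂ} (hu : IsOrthogonalToMonomials μ n u) : u =ᵐ[μ] 0 := by
  filter_upwards [htotal _ (hu.continuousLinearMap_comp hμ Complex.reCLM),
    htotal _ (hu.continuousLinearMap_comp hμ Complex.imCLM)] with x hre him
  exact Complex.ext hre him

/-- The classes in the complex `L²(μ)` of the polynomials divisible by `X ^ n`, that is, the linear
span of the monomials `x ^ k` with `k ≥ n`. -/
def polynomialsL2 (μ : Measure ℝ) (n : ℕ) : Submodule ℂ (Lp ℂ 2 μ) where
  carrier := {f | ∃ p : ℂ[X], (∀ j : ℕ, j < n → p.coeff j = 0) ∧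
    ⇑f =ᵐ[μ] fun x : ℝ => p.eval (x : ℂ)}
  zero_mem' := ⟨0, by simp, (Lp.coeFn_zero _ _ _).trans (ae_of_all _ fun x => by simp)⟩
  add_mem' := by
    rintro f g ⟨p, hp, hfp⟩ ⟨q, hq, hgq⟩
    refine ⟨p + q, fun j hj => by simp [hp j hj, hq j hj], ?_⟩
    filter_upwards [Lp.coeFn_add f g, hfp, hgq] with x hadd hfx hgx
    rw [hadd, Pi.add_apply, hfx, hgx, eval_add]
  smul_mem' := by
    rintro a f ⟨p, hp, hfp⟩
    refine ⟨a • p, fun j hj => by simp [hp j hj], ?_⟩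
    filter_upwards [Lp.coeFn_smul a f, hfp] with x hsmul hfx
    rw [hsmul, Pi.smul_apply, hfx, eval_smul]

lemma isOrthogonalToMonomials_of_mem_orthogonal (hμ : HasAllMoments μ) {u : Lp ℂ 2 μ}
    (hu : u ∈ (polynomialsL2 μ n)ᗮ) : IsOrthogonalToMonomials μ n u where
  memLp := Lp.memLp u
  integral_pow_smul k hk := by
    have hpow : MemLp (fun x : ℝ => (x : ℂ) ^ k) 2 μ := by
      simpa using (hμ.memLp_eval (X ^ k)).ofReal (K := ℂ)
    have hmem : hpow.toLp _ ∈ polynomialsL2 μ n :=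
      ⟨X ^ k, fun j hj => by rw [coeff_X_pow, if_neg (hj.trans_le hk).ne],
        hpow.coeFn_toLp.trans (ae_of_all _ fun x => by simp)⟩
    rw [← (Submodule.mem_orthogonal _ u).1 hu _ hmem, L2.inner_def]
    refine integral_congr_ae ?_
    filter_upwards [hpow.coeFn_toLp] with x hx
    rw [hx]
    simp [mul_comm]

lemma dense_polynomialsL2 (hμ : HasAllMoments μ) (htotal : MonomialsTotal μ n) :
    Dense (polynomialsL2 μ n : Set (Lp ℂ 2 μ)) := by
  rw [Submodule.dense_iff_topologicalClosure_eq_top, Submodule.topologicalClosure_eq_top_iff,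
    Submodule.eq_bot_iff]
  exact fun u hu => Lp.eq_zero_iff_ae_eq_zero.2
    (htotal.ae_eq_zero_of_complex hμ (isOrthogonalToMonomials_of_mem_orthogonal hμ hu))

end ComplexDensity

theorem stmt0_general (μ : Measure ℝ) (hmom : HasAllMoments μ) (hdet : IsDeterminate μ)
    (h0 : (0 : ℝ) ∈ mSupp μ) (hmass : μ {0} = 0) (n : ℕ) :
    Dense {f : Lp ℂ 2 μ | ∃ p : Polynomial ℂ,
      (∀ j : ℕ, j < n → p.coeff j = 0) ∧
      ⇑f =ᵐ[μ] fun x : ℝ => p.eval (x : ℂ)} :=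
  dense_polynomialsL2 hmom (monomialsTotal hmom hdet h0 hmass n)

theorem stmt0 (μ : Measure ℝ) (hmom : HasAllMoments μ) (hinf : (mSupp μ).Infinite)
    (hdet : IsDeterminate μ) (hsupp : mSupp μ ⊆ Set.Ici (0 : ℝ))
    (h0 : (0 : ℝ) ∈ mSupp μ) (hmass : μ {0} = 0) (n : ℕ) :
    Dense {f : Lp ℂ 2 μ | ∃ p : Polynomial ℂ,
      (∀ j : ℕ, j < n → p.coeff j = 0) ∧
      ⇑f =ᵐ[μ] fun x : ℝ => p.eval (x : ℂ)} := by
  exact stmt0_general μ hmom hdet h0 hmass n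
end
end

section
/- Let μ be a determinate measure on ℝ with all moments finite and infinite support, such that supp(μ) ⊆ [0,∞) and 0 ∈ supp(μ) is not an isolated point of supp(μ). Let (p_n) be the orthonormal polynomials of μ, and write p_n(x) = γ_{n,n}x^n + γ_{n,n-1}x^{n-1} + ⋯ + γ_{n,1}x + γ_{n,0}. Then for every fixed k ∈ ℕ₀, the coefficients γ_{n,k+1} are nonzero for n ≥ k+1 and lim_{n→∞} |γ_{n,k}/γ_{n,k+1}| = 0. -/
open MeasureTheory Polynomial Filter

noncomputable section

/-- The complex polynomial functions are dense in `L²(ν)`. -/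
def PolyDense (ν : Measure ℝ) : Prop :=
  Dense {f : Lp ℂ 2 ν | ∃ p : Polynomial ℂ, ⇑f =ᵐ[ν] fun x : ℝ => p.eval (x : ℂ)}

/-!
The zeros of `p n` are simple and positive, so by Vieta the coefficients of `p n` are nonzero and,
up to sign and the leading coefficient, are those of the product of the `X + z` over the zeros `z`.
Multiplying a polynomial with nonnegative coefficients by `k + 1` factors `X + z` with
`0 ≤ z ≤ δ` yields `c` with `c k ≤ (k + 1) δ c (k + 1)`, so it suffices that more and more zeros
of `p n` approach `0`.

Gauss quadrature at the zeros of `p n` is an atomic measure with the first `2 n` moments of `μ`.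
By Prokhorov's theorem and determinacy these measures converge weakly to `μ`. Hence the zeros of
`p n` eventually enter every open set meeting the support of `μ`, and every neighbourhood of `0`
contains infinitely many disjoint such sets because `0` is an accumulation point of the support.
-/

open scoped NNReal ENNReal Topology BoundedContinuousFunction

section Coefficients

variable {R : Type*} [CommRing R] [LinearOrder R] [IsStrictOrderedRing R]

lemma coeff_X_add_C_mul_nonneg {a : R} (ha : 0 ≤ a) {f : R[X]} (hf : ∀ j, 0 ≤ f.coeff j) (j : ℕ) :
    0 ≤ ((X + C a) * f).coeff j := by
  cases j with
  | zero => simpa using mul_nonneg ha (hf 0)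
  | succ j => simpa [add_mul] using add_nonneg (hf j) (mul_nonneg ha (hf (j + 1)))

lemma coeff_prod_X_add_C_mul_nonneg {s : Multiset R} (hs : ∀ a ∈ s, 0 ≤ a) {f : R[X]}
    (hf : ∀ j, 0 ≤ f.coeff j) (j : ℕ) :
    0 ≤ ((s.map fun a ↦ X + C a).prod * f).coeff j := by
  induction s using Multiset.induction generalizing j with
  | empty => simpa using hf j
  | cons a s ih =>
    rw [Multiset.map_cons, Multiset.prod_cons, mul_assoc]
    exact coeff_X_add_C_mul_nonneg (hs a (by simp)) (ih fun b hb ↦ hs b (by simp [hb])) j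

lemma coeff_prod_X_add_C_nonneg {s : Multiset R} (hs : ∀ a ∈ s, 0 ≤ a) (j : ℕ) :
    0 ≤ (s.map fun a ↦ X + C a).prod.coeff j := by
  simpa using coeff_prod_X_add_C_mul_nonneg hs (f := 1) (fun i ↦ by rw [coeff_one]; positivity) j

lemma coeff_prod_X_add_C_pos {s : Multiset R} (hs : ∀ a ∈ s, 0 < a) {j : ℕ} (hj : j ≤ s.card) :
    0 < (s.map fun a ↦ X + C a).prod.coeff j := by
  induction s using Multiset.induction generalizing j with
  | empty => simp_all
  | cons a s ih =>
    have ha : 0 < a := hs a (by simp)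
    have hs' : ∀ b ∈ s, 0 < b := fun b hb ↦ hs b (by simp [hb])
    rw [Multiset.map_cons, Multiset.prod_cons, add_mul]
    cases j with
    | zero => simpa using mul_pos ha (ih hs' (Nat.zero_le _))
    | succ j =>
      rw [coeff_add, coeff_X_mul, coeff_C_mul]
      have hj' : j ≤ s.card := by simpa using hj
      exact add_pos_of_pos_of_nonneg (ih hs' hj')
        (mul_nonneg ha.le (coeff_prod_X_add_C_nonneg (fun b hb ↦ (hs' b hb).le) _))

lemma coeff_prod_X_add_C_mul_le {δ : R} {s : Multiset R} (hs : ∀ a ∈ s, 0 ≤ a ∧ a ≤ δ) {f : R[X]}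
    (hf : ∀ j, 0 ≤ f.coeff j) {k : ℕ} (hk : k < s.card) :
    ((s.map fun a ↦ X + C a).prod * f).coeff k ≤
      (k + 1) * δ * ((s.map fun a ↦ X + C a).prod * f).coeff (k + 1) := by
  induction s using Multiset.induction generalizing k with
  | empty => simp at hk
  | cons a s ih =>
    obtain ⟨ha, haδ⟩ := hs a (by simp)
    have hs' : ∀ b ∈ s, 0 ≤ b ∧ b ≤ δ := fun b hb ↦ hs b (by simp [hb])
    have hδ : 0 ≤ δ := ha.trans haδ
    rw [Multiset.map_cons, Multiset.prod_cons, mul_assoc, add_mul]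
    set g := (s.map fun a ↦ X + C a).prod * f
    have hg : ∀ j, 0 ≤ g.coeff j := coeff_prod_X_add_C_mul_nonneg (fun b hb ↦ (hs' b hb).1) hf
    have hmul : a * g.coeff k ≤ δ * g.coeff k := mul_le_mul_of_nonneg_right haδ (hg k)
    have hrest : 0 ≤ (k + 1) * δ * (a * g.coeff (k + 1)) := by have := hg (k + 1); positivity
    cases k with
    | zero =>
      simp only [coeff_add, coeff_X_mul_zero, coeff_X_mul, coeff_C_mul, zero_add] at hrest ⊢
      push_cast at hrest ⊢
      linarith
    | succ k =>
      have hprev : g.coeff k ≤ (k + 1) * δ * g.coeff (k + 1) := ih hs' (by simpa using hk)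
      simp only [coeff_add, coeff_X_mul, coeff_C_mul]
      push_cast at hrest ⊢
      linarith

end Coefficients

section PositiveRoots

variable {K : Type*} [Field K] [LinearOrder K] [IsStrictOrderedRing K] {P : K[X]}

lemma abs_coeff_eq_of_splits (hP : P.Splits) (hroots : ∀ z ∈ P.roots, 0 ≤ z) {k : ℕ}
    (hk : k ≤ P.natDegree) :
    |P.coeff k| = |P.leadingCoeff| * (P.roots.map fun z ↦ X + C z).prod.coeff k := by
  have hcard : P.natDegree = P.roots.card := hP.natDegree_eq_card_roots
  have hvieta := P.roots.prod_X_add_C_coeff (hcard ▸ hk)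
  rw [← hcard] at hvieta
  rw [← abs_of_nonneg (coeff_prod_X_add_C_nonneg hroots k), hvieta,
    coeff_eq_esymm_roots_of_splits hP hk]
  simp [abs_mul]

lemma coeff_ne_zero_of_splits (hP : P.Splits) (hP0 : P ≠ 0) (hroots : ∀ z ∈ P.roots, 0 < z)
    {k : ℕ} (hk : k ≤ P.natDegree) : P.coeff k ≠ 0 := by
  rw [← abs_pos, abs_coeff_eq_of_splits hP (fun z hz ↦ (hroots z hz).le) hk]
  exact mul_pos (abs_pos.2 (leadingCoeff_ne_zero.2 hP0))
    (coeff_prod_X_add_C_pos hroots (hP.natDegree_eq_card_roots ▸ hk))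

lemma abs_coeff_le_of_lt_card_roots_lt (hP : P.Splits) (hroots : ∀ z ∈ P.roots, 0 ≤ z) {δ : K}
    {k : ℕ} (hk : k < (P.roots.filter (· < δ)).card) :
    |P.coeff k| ≤ (k + 1) * δ * |P.coeff (k + 1)| := by
  have hkdeg : k + 1 ≤ P.natDegree :=
    hk.trans_le (hP.natDegree_eq_card_roots ▸ Multiset.card_le_card (Multiset.filter_le _ _))
  rw [abs_coeff_eq_of_splits hP hroots (by lia), abs_coeff_eq_of_splits hP hroots hkdeg,
    mul_left_comm]
  refine mul_le_mul_of_nonneg_left ?_ (abs_nonneg _)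
  rw [← Multiset.filter_add_not (· < δ) P.roots, Multiset.map_add, Multiset.prod_add]
  refine coeff_prod_X_add_C_mul_le (fun z hz ↦ ?_) (coeff_prod_X_add_C_nonneg fun z hz ↦ ?_) hk
  · exact ⟨hroots z (Multiset.mem_of_mem_filter hz), (Multiset.of_mem_filter hz).le⟩
  · exact hroots z (Multiset.mem_of_mem_filter hz)

end PositiveRoots

lemma tendsto_abs_coeff_div_of_roots_accumulate {ι : Type*} {l : Filter ι} {P : ι → ℝ[X]}
    (hP : ∀ i, (P i).Splits) (hroots : ∀ i, ∀ z ∈ (P i).roots, 0 ≤ z) (k : ℕ)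
    (hacc : ∀ δ > 0, ∀ᶠ i in l, k < ((P i).roots.filter (· < δ)).card) :
    Tendsto (fun i ↦ |(P i).coeff k / (P i).coeff (k + 1)|) l (𝓝 0) := by
  rw [Metric.tendsto_nhds]
  intro ε hε
  have hδ : 0 < ε / (2 * (k + 1)) := by positivity
  filter_upwards [hacc _ hδ] with i hi
  have hbound := abs_coeff_le_of_lt_card_roots_lt (hP i) (hroots i) hi
  rw [show ((k : ℝ) + 1) * (ε / (2 * (k + 1))) = ε / 2 by field_simp] at hbound
  rw [Real.dist_eq, sub_zero, abs_abs, abs_div]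
  calc _ ≤ ε / 2 := div_le_of_le_mul₀ (abs_nonneg _) (by positivity) hbound
    _ < ε := half_lt_self hε

section OrthogonalPolynomials

variable {K : Type*} [Field K]

/-- `P` is orthogonal, for the bilinear form `(f, g) ↦ L (f * g)` of a linear functional `L`, to
all polynomials of lower degree. This is the only part of being a member of an orthogonal sequence
that the location of zeros and Gauss quadrature depend on. -/
def IsOrthogonalToLower (L : K[X] →ₗ[K] K) (P : K[X]) : Prop :=
  ∀ q : K[X], q.degree < P.degree → L (P * q) = 0

lemma isOrthogonalToLower_of_pairwise {L : K[X] →ₗ[K] K} {p : ℕ → K[X]}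
    (hdeg : ∀ n, (p n).degree = n) (horth : Pairwise fun n m ↦ L (p n * p m) = 0) (n : ℕ) :
    IsOrthogonalToLower L (p n) := by
  intro q hq
  let S : Polynomial.Sequence K := ⟨p, hdeg⟩
  have hspan : Submodule.span K (S '' Set.Iio n) = degreeLT K n :=
    S.span_degreeLT fun i _ ↦ (leadingCoeff_ne_zero.2 (S.ne_zero i)).isUnit
  have hker : Submodule.span K (S '' Set.Iio n) ≤
      LinearMap.ker (L ∘ₗ LinearMap.mulLeft K (p n)) := by
    rw [Submodule.span_le]
    rintro _ ⟨m, hm, rfl⟩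
    exact horth (Set.mem_Iio.1 hm).ne'
  exact hker (hspan ▸ mem_degreeLT.2 (hdeg n ▸ hq))

lemma degree_div_lt_of_degree_lt_two_mul {P f : K[X]} {n : ℕ} (hP : P.degree = n)
    (hf : f.degree < (2 * n : ℕ)) : (f / P).degree < n := by
  have hP0 : P ≠ 0 := by rintro rfl; simp at hP
  rcases eq_or_ne (f / P) 0 with hq | hq
  · simp [hq]
  have hle : P.degree ≤ f.degree :=
    not_lt.1 fun hlt ↦ hq ((Polynomial.div_eq_zero_iff hP0).2 hlt)
  rw [← degree_add_div hP0 hle, hP, degree_eq_natDegree hq] at hf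
  rw [degree_eq_natDegree hq]
  norm_cast at hf ⊢
  lia

variable [DecidableEq K] {L : K[X] →ₗ[K] K} {P : K[X]} {Z : Finset K}

theorem IsOrthogonalToLower.gauss_quadrature (hP : IsOrthogonalToLower L P) (hZ : P.degree = Z.card)
    (hroot : ∀ z ∈ Z, P.IsRoot z) {f : K[X]} (hf : f.degree < (2 * Z.card : ℕ)) :
    L f = ∑ z ∈ Z, L (Lagrange.basis Z id z) * f.eval z := by
  have hP0 : P ≠ 0 := by rintro rfl; simp at hZ
  have hdecomp : P * (f / P) + f % P = f := EuclideanDomain.div_add_mod f P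
  have hmod : f % P = Lagrange.interpolate Z id fun z ↦ f.eval z := by
    refine Lagrange.eq_interpolate_of_eval_eq _ Function.injective_id.injOn
      (hZ ▸ EuclideanDomain.mod_lt f hP0) fun z hz ↦ ?_
    conv_rhs => rw [← hdecomp]
    simp [(hroot z hz).eq_zero]
  calc L f = L (P * (f / P)) + L (f % P) := by rw [← map_add, hdecomp]
    _ = L (f % P) := by
      rw [hP _ (hZ ▸ degree_div_lt_of_degree_lt_two_mul hZ hf), zero_add]
    _ = ∑ z ∈ Z, L (Lagrange.basis Z id z) * f.eval z := by
      rw [hmod, Lagrange.interpolate_apply, map_sum]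
      refine Finset.sum_congr rfl fun z _ ↦ ?_
      rw [← smul_eq_C_mul, map_smul, smul_eq_mul, mul_comm]

-- Exhibits the quadrature weights as nonnegative when `L` is nonnegative on squares.
lemma IsOrthogonalToLower.apply_basis_eq_apply_basis_sq (hP : IsOrthogonalToLower L P)
    (hZ : P.degree = Z.card) (hroot : ∀ z ∈ Z, P.IsRoot z) {z : K} (hz : z ∈ Z) :
    L (Lagrange.basis Z id z) = L (Lagrange.basis Z id z ^ 2) := by
  have hcard : 0 < Z.card := Finset.card_pos.2 ⟨z, hz⟩
  have hdeg : (Lagrange.basis Z id z ^ 2).degree < (2 * Z.card : ℕ) := by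
    rw [degree_pow, Lagrange.degree_basis Function.injective_id.injOn hz, nsmul_eq_mul]
    exact_mod_cast (by lia : 2 * (Z.card - 1) < 2 * Z.card)
  rw [hP.gauss_quadrature hZ hroot hdeg, Finset.sum_eq_single_of_mem z hz]
  · have hself : (Lagrange.basis Z id z).eval z = 1 :=
      Lagrange.eval_basis_self Function.injective_id.injOn hz
    simp [hself]
  · intro y hy hyz
    have hne : (Lagrange.basis Z id z).eval y = 0 :=
      Lagrange.eval_basis_of_ne (v := id) hyz.symm hy
    simp [hne]

end OrthogonalPolynomials

section Zeros

/-- The linear functional `L` is strictly positive on the nonzero polynomials that are nonnegative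
on `S`, as is integration against a measure whose support is infinite and equal to `S`. -/
def IsPositiveOn (L : ℝ[X] →ₗ[ℝ] ℝ) (S : Set ℝ) : Prop :=
  ∀ f : ℝ[X], f ≠ 0 → (∀ x ∈ S, 0 ≤ f.eval x) → 0 < L f

variable {L : ℝ[X] →ₗ[ℝ] ℝ} {S : Set ℝ} {P : ℝ[X]}

-- If `P = g * r` with `g ≥ 0` on `S`, then `P * r = g * r ^ 2 ≥ 0` on `S`, against `L (P * r) = 0`.
lemma IsPositiveOn.exists_eval_neg_of_dvd (hL : IsPositiveOn L S) (hP : IsOrthogonalToLower L P)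
    (hP0 : P ≠ 0) {g : ℝ[X]} (hg : g ∣ P) (hdeg : 0 < g.degree) : ∃ x ∈ S, g.eval x < 0 := by
  obtain ⟨r, rfl⟩ := hg
  obtain ⟨hg0, hr0⟩ := mul_ne_zero_iff.1 hP0
  by_contra! hnonneg
  have hr : r.degree < (g * r).degree := by
    rw [degree_mul, degree_eq_natDegree hg0, degree_eq_natDegree hr0] at *
    norm_cast at *
    lia
  have hpos : 0 < L (g * r * r) := by
    rw [mul_assoc, ← sq]
    refine hL _ (mul_ne_zero hg0 (pow_ne_zero 2 hr0)) fun x hx ↦ ?_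
    rw [eval_mul, eval_pow]
    exact mul_nonneg (hnonneg x hx) (sq_nonneg _)
  exact hpos.ne' (hP r hr)

lemma IsPositiveOn.splits (hL : IsPositiveOn L S) (hP : IsOrthogonalToLower L P) (hP0 : P ≠ 0) :
    P.Splits := by
  obtain ⟨u, hu⟩ := UniqueFactorizationMonoid.factors_prod hP0
  rw [← hu]
  refine (Splits.multisetProd fun g hg ↦ ?_).mul u.isUnit.splits
  have hirr := UniqueFactorizationMonoid.irreducible_of_factor g hg
  have hdvd := UniqueFactorizationMonoid.dvd_of_mem_factors hg
  have hdeg : 0 < g.degree := degree_pos_of_irreducible hirr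
  obtain ⟨x, -, hx⟩ := hL.exists_eval_neg_of_dvd hP hP0 hdvd hdeg
  obtain ⟨y, -, hy⟩ := hL.exists_eval_neg_of_dvd hP hP0 (neg_dvd.2 hdvd) (degree_neg g ▸ hdeg)
  rw [eval_neg, neg_lt_zero] at hy
  obtain ⟨z, hz⟩ := mem_range_of_exists_le_of_exists_ge g.continuous ⟨x, hx.le⟩ ⟨y, hy.le⟩
  exact Splits.of_degree_eq_one (degree_eq_one_of_irreducible_of_root hirr hz)

lemma IsPositiveOn.nodup_roots (hL : IsPositiveOn L S) (hP : IsOrthogonalToLower L P)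
    (hP0 : P ≠ 0) : P.roots.Nodup := by
  refine Multiset.nodup_iff_count_le_one.2 fun z ↦ ?_
  by_contra! hcount
  have hdvd : (X - C z) ^ 2 ∣ P := (le_rootMultiplicity_iff hP0).1 (count_roots P ▸ hcount)
  obtain ⟨x, -, hx⟩ := hL.exists_eval_neg_of_dvd hP hP0 hdvd (by simp [degree_pow])
  rw [eval_pow] at hx
  exact hx.not_ge (sq_nonneg _)

lemma IsPositiveOn.lt_of_mem_roots (hL : IsPositiveOn L S) (hP : IsOrthogonalToLower L P) {a z : ℝ}
    (hS : S ⊆ Set.Ici a) (hz : z ∈ P.roots) : a < z := by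
  obtain ⟨hP0, hroot⟩ := mem_roots'.1 hz
  obtain ⟨x, hxS, hx⟩ := hL.exists_eval_neg_of_dvd hP hP0 (dvd_iff_isRoot.2 hroot) (by simp)
  have hxz : x < z := by simpa using hx
  exact (hS hxS).trans_lt hxz

end Zeros

section Accumulation

lemma eventually_le_card_filter_mem_of_infinite {X ι : Type*} [TopologicalSpace X] [T2Space X]
    {l : Filter ι} {S U : Set X} [DecidablePred (· ∈ U)] {Z : ι → Finset X}
    (hZ : ∀ V, IsOpen V → (S ∩ V).Nonempty → ∀ᶠ i in l, ∃ z ∈ Z i, z ∈ V)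
    (hU : IsOpen U) (hinf : (S ∩ U).Infinite) (k : ℕ) :
    ∀ᶠ i in l, k ≤ {z ∈ Z i | z ∈ U}.card := by
  obtain ⟨T, hTS, rfl⟩ := hinf.exists_subset_card_eq k
  obtain ⟨V, hV, hdisj⟩ := T.finite_toSet.t2_separation
  have hmeet : ∀ᶠ i in l, ∀ t ∈ T, ∃ z ∈ Z i, z ∈ U ∩ V t :=
    (eventually_all_finset T).2 fun t ht ↦
      hZ _ (hU.inter (hV t).2) ⟨t, (hTS ht).1, (hTS ht).2, (hV t).1⟩
  filter_upwards [hmeet] with i hi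
  choose! z hzZ hzUV using hi
  refine Finset.card_le_card_of_injOn z
    (fun t ht ↦ Finset.mem_filter.2 ⟨hzZ t ht, (hzUV t ht).1⟩) fun s hs t ht hst ↦ ?_
  by_contra hne
  exact Set.disjoint_left.1 (hdisj hs ht hne) (hzUV s hs).2 (hst ▸ (hzUV t ht).2)

lemma infinite_inter_of_mem_closure_diff_singleton {X : Type*} [TopologicalSpace X] [T1Space X]
    {S U : Set X} {x : X} (hx : x ∈ closure (S \ {x})) (hU : U ∈ 𝓝 x) : (S ∩ U).Infinite := by
  have hacc : AccPt x (𝓟 S) := by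
    rwa [accPt_principal_iff_clusterPt, ← mem_closure_iff_clusterPt]
  rw [Set.inter_comm]
  exact Set.Infinite.of_accPt (hacc.nhds_inter hU)

end Accumulation

section Truncation

variable {Ω : Type*} [TopologicalSpace Ω]

/-- The bounded continuous function obtained by clamping the values of `g` to `[-R, R]`, used to
test weak convergence against the unbounded function `g`. -/
def truncation (g : C(Ω, ℝ)) (R : ℝ≥0) : Ω →ᵇ ℝ :=
  .ofNormedAddCommGroup (fun x ↦ max (-R) (min (g x) R)) (by fun_prop) R fun x ↦
    abs_le.2 ⟨le_max_left _ _, max_le (by simp) (min_le_right _ _)⟩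

lemma abs_sub_truncation_le (g : C(Ω, ℝ)) {R : ℝ≥0} (hR : 0 < R) (x : Ω) :
    |g x - truncation g R x| ≤ g x ^ 2 / R := by
  have hR' : (0 : ℝ) < R := hR
  change |g x - max (-(R : ℝ)) (min (g x) R)| ≤ _
  rw [le_div_iff₀ hR']
  rcases le_total (g x) R with hle | hle
  · rw [min_eq_left hle]
    rcases le_total (-(R : ℝ)) (g x) with hge | hge
    · rw [max_eq_right hge, sub_self]
      simpa using sq_nonneg _
    · rw [max_eq_left hge, abs_of_nonpos (by linarith)]
      nlinarith
  · rw [min_eq_right hle, max_eq_right (by linarith), abs_of_nonneg (by linarith)]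
    nlinarith

end Truncation

section WeakConvergence

variable {Ω ι : Type*} [MeasurableSpace Ω] [TopologicalSpace Ω] [OpensMeasurableSpace Ω]
  {l : Filter ι} {ν : ι → FiniteMeasure Ω} {μ : FiniteMeasure Ω}

lemma lintegral_le_of_tendsto_finiteMeasure [l.NeBot] (hν : Tendsto ν l (𝓝 μ)) {h : Ω → ℝ≥0}
    (hh : Continuous h) {C : ℝ≥0∞} (hC : ∀ᶠ i in l, ∫⁻ x, h x ∂(ν i : Measure Ω) ≤ C) :
    ∫⁻ x, h x ∂(μ : Measure Ω) ≤ C := by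
  let trunc (n : ℕ) : Ω →ᵇ ℝ≥0 :=
    .mkOfBound ⟨fun x ↦ min (h x) n, by fun_prop⟩ n fun x y ↦ by
      rw [NNReal.dist_eq]
      exact abs_sub_le_of_nonneg_of_le (NNReal.coe_nonneg _) (by simp) (NNReal.coe_nonneg _)
        (by simp)
  have htrunc (n : ℕ) (x : Ω) : (trunc n x : ℝ≥0∞) = min (h x : ℝ≥0∞) n :=
    ENNReal.coe_min (h x) n
  calc ∫⁻ x, h x ∂(μ : Measure Ω) = ∫⁻ x, ⨆ n : ℕ, min (h x : ℝ≥0∞) n ∂(μ : Measure Ω) := by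
        simp_rw [← inf_iSup_eq, ENNReal.iSup_natCast, inf_top_eq]
    _ = ⨆ n : ℕ, ∫⁻ x, min (h x : ℝ≥0∞) n ∂(μ : Measure Ω) :=
      lintegral_iSup (fun n ↦ by fun_prop) fun m n hmn x ↦ by dsimp only; gcongr
    _ ≤ C := iSup_le fun n ↦ ?_
  simp_rw [← htrunc]
  refine le_of_tendsto (FiniteMeasure.tendsto_iff_forall_lintegral_tendsto.1 hν (trunc n)) ?_
  filter_upwards [hC] with i hi
  refine (lintegral_mono fun x ↦ ?_).trans hi
  simp [htrunc]

lemma integrable_and_integral_le_of_tendsto_finiteMeasure [l.NeBot] (hν : Tendsto ν l (𝓝 μ))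
    {h : Ω → ℝ} (hh : Continuous h) (hh0 : ∀ x, 0 ≤ h x)
    (hint : ∀ i, Integrable h (ν i : Measure Ω)) {C : ℝ}
    (hC : ∀ᶠ i in l, ∫ x, h x ∂(ν i : Measure Ω) ≤ C) :
    Integrable h (μ : Measure Ω) ∧ ∫ x, h x ∂(μ : Measure Ω) ≤ C := by
  have hC0 : 0 ≤ C := by
    obtain ⟨i, hi⟩ := hC.exists
    exact (integral_nonneg hh0).trans hi
  have hlintegral : ∫⁻ x, ENNReal.ofReal (h x) ∂(μ : Measure Ω) ≤ ENNReal.ofReal C := by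
    refine lintegral_le_of_tendsto_finiteMeasure hν (h := fun x ↦ (h x).toNNReal) (by fun_prop) ?_
    filter_upwards [hC] with i hi
    exact (ofReal_integral_eq_lintegral_ofReal (hint i) (.of_forall hh0)).symm.trans_le
      (ENNReal.ofReal_le_ofReal hi)
  have hμ : Integrable h (μ : Measure Ω) :=
    lintegral_ofReal_ne_top_iff_integrable hh.aestronglyMeasurable (.of_forall hh0) |>.1
      (ne_top_of_le_ne_top ENNReal.ofReal_ne_top hlintegral)
  refine ⟨hμ, ?_⟩
  rwa [← ofReal_integral_eq_lintegral_ofReal hμ (.of_forall hh0),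
    ENNReal.ofReal_le_ofReal_iff hC0] at hlintegral

lemma abs_integral_sub_integral_truncation_le (m : Measure Ω) [IsFiniteMeasure m] (g : C(Ω, ℝ))
    (hg : Integrable (fun x ↦ g x ^ 2) m) {R : ℝ≥0} (hR : 0 < R) :
    |∫ x, g x ∂m - ∫ x, truncation g R x ∂m| ≤ (∫ x, g x ^ 2 ∂m) / R := by
  have hg1 : Integrable g m :=
    ((memLp_two_iff_integrable_sq g.continuous.aestronglyMeasurable).2 hg).integrable one_le_two
  rw [← integral_sub hg1 ((truncation g R).integrable m), ← integral_div]
  exact (abs_integral_le_integral_abs).trans <| integral_mono_of_nonneg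
    (.of_forall fun _ ↦ abs_nonneg _) (hg.div_const _) (.of_forall (abs_sub_truncation_le g hR))

theorem tendsto_integral_of_tendsto_finiteMeasure (hν : Tendsto ν l (𝓝 μ)) (g : C(Ω, ℝ))
    (hint : ∀ i, Integrable (fun x ↦ g x ^ 2) (ν i : Measure Ω)) {C : ℝ}
    (hC : ∀ᶠ i in l, ∫ x, g x ^ 2 ∂(ν i : Measure Ω) ≤ C) :
    Tendsto (fun i ↦ ∫ x, g x ∂(ν i : Measure Ω)) l (𝓝 (∫ x, g x ∂(μ : Measure Ω))) := by
  rcases l.eq_or_neBot with rfl | _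
  · exact tendsto_bot
  obtain ⟨hμ, hμC⟩ := integrable_and_integral_le_of_tendsto_finiteMeasure hν (by fun_prop)
    (fun x ↦ sq_nonneg (g x)) hint hC
  have herror {m : FiniteMeasure Ω} (hm : Integrable (fun x ↦ g x ^ 2) (m : Measure Ω))
      (hmC : ∫ x, g x ^ 2 ∂(m : Measure Ω) ≤ C) {R : ℝ≥0} (hR : 0 < R) :
      |∫ x, g x ∂(m : Measure Ω) - ∫ x, truncation g R x ∂(m : Measure Ω)| ≤ C / R :=
    (abs_integral_sub_integral_truncation_le _ g hm hR).trans (by gcongr)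
  rw [Metric.tendsto_nhds]
  intro ε hε
  obtain ⟨R, hRC, hR⟩ : ∃ R : ℝ≥0, C / R < ε / 3 ∧ 0 < R := by
    have hlim : Tendsto (fun R : ℝ≥0 ↦ C / R) atTop (𝓝 0) :=
      tendsto_const_nhds.div_atTop (NNReal.tendsto_coe_atTop.2 tendsto_id)
    exact ((hlim.eventually_lt_const (by positivity)).and (eventually_gt_atTop 0)).exists
  have htrunc := FiniteMeasure.tendsto_iff_forall_integral_tendsto.1 hν (truncation g R)
  filter_upwards [hC, Metric.tendsto_nhds.1 htrunc (ε / 3) (by positivity)] with i hi hiε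
  have hνi := abs_le.1 (herror (hint i) hi hR)
  have hμR := abs_le.1 (herror hμ hμC hR)
  rw [Real.dist_eq, abs_lt] at hiε ⊢
  constructor <;> linarith

lemma eventually_measure_ne_zero_of_isOpen [HasOuterApproxClosed Ω] (hν : Tendsto ν l (𝓝 μ))
    {U : Set Ω} (hU : IsOpen U) (hμU : (μ : Measure Ω) U ≠ 0) :
    ∀ᶠ i in l, (ν i : Measure Ω) U ≠ 0 := by
  have hlt : (μ : Measure Ω) Uᶜ < (μ : Measure Ω) Set.univ := by
    rw [← measure_add_measure_compl hU.measurableSet, add_comm]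
    exact ENNReal.lt_add_right (measure_ne_top _ _) hμU
  obtain ⟨c, hUc, hc⟩ := exists_between hlt
  have hcompl : ∀ᶠ i in l, (ν i : Measure Ω) Uᶜ < c := eventually_lt_of_limsup_lt
    ((FiniteMeasure.limsup_measure_closed_le_of_tendsto hν hU.isClosed_compl).trans_lt hUc)
  have hmass : Tendsto (fun i ↦ (ν i : Measure Ω) Set.univ) l (𝓝 ((μ : Measure Ω) Set.univ)) := by
    simpa using FiniteMeasure.tendsto_iff_forall_lintegral_tendsto.1 hν 1
  filter_upwards [hcompl, hmass.eventually_const_lt hc] with i hi hi' hzero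
  rw [← measure_add_measure_compl hU.measurableSet, hzero, zero_add] at hi'
  exact hi.not_gt hi'

end WeakConvergence

-- Prokhorov's theorem, with tightness supplied by Markov's inequality.
lemma exists_isCompact_finiteMeasure_of_sq_moment_le {E : Type*} [NormedAddCommGroup E]
    [ProperSpace E] [MeasurableSpace E] [BorelSpace E] (A : ℝ≥0) (B : ℝ) :
    ∃ 𝒦 : Set (FiniteMeasure E), IsCompact 𝒦 ∧ ∀ ν : FiniteMeasure E, ν.mass ≤ A →
      Integrable (fun x ↦ ‖x‖ ^ 2) (ν : Measure E) → ∫ x, ‖x‖ ^ 2 ∂(ν : Measure E) ≤ B →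
      ν ∈ 𝒦 := by
  have hu : Tendsto (fun n : ℕ ↦ (B / (n + 1)).toNNReal) atTop (𝓝 0) := by
    simpa using (tendsto_real_toNNReal
      (tendsto_const_nhds.div_atTop (tendsto_natCast_atTop_atTop.atTop_add tendsto_const_nhds)))
  refine ⟨_, isCompact_setOfPred_finiteMeasure_mass_le_compl_isCompact_le A hu
    (fun n : ℕ ↦ isCompact_closedBall (0 : E) (n + 1)) (.inl inferInstance), ?_⟩
  refine fun ν hmass hint hB ↦ ⟨hmass, fun n ↦ NNReal.le_toNNReal_of_coe_le ?_⟩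
  have hn : (1 : ℝ) ≤ n + 1 := by simp
  rw [le_div_iff₀' (by positivity)]
  have hsub : (Metric.closedBall (0 : E) (n + 1))ᶜ ⊆ {x | (n + 1 : ℝ) ≤ ‖x‖ ^ 2} := fun x hx ↦ by
    have hx' : (n + 1 : ℝ) < ‖x‖ := by simpa using hx
    exact hx'.le.trans (le_self_pow₀ (hn.trans hx'.le) two_ne_zero)
  calc (n + 1 : ℝ) * ν (Metric.closedBall (0 : E) (n + 1))ᶜ
      ≤ (n + 1) * (ν : Measure E).real {x | (n + 1 : ℝ) ≤ ‖x‖ ^ 2} :=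
        mul_le_mul_of_nonneg_left (measureReal_mono hsub) (by positivity)
    _ ≤ ∫ x, ‖x‖ ^ 2 ∂(ν : Measure E) :=
      mul_meas_ge_le_integral_of_nonneg (.of_forall fun _ ↦ by positivity) hint _
    _ ≤ B := hB

section Moments

variable {μ : Measure ℝ}

lemma HasAllMoments.integrable_pow (hμ : HasAllMoments μ) (n : ℕ) :
    Integrable (fun x : ℝ ↦ x ^ n) μ :=
  (hμ n).mono' (by fun_prop) (.of_forall fun x ↦ by simp)

lemma HasAllMoments.isFiniteMeasure_s4 (hμ : HasAllMoments μ) : IsFiniteMeasure μ := by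
  have hone : Integrable (fun _ : ℝ ↦ (1 : ℝ)) μ := by simpa using hμ 0
  exact (integrable_const_iff_isFiniteMeasure one_ne_zero).1 hone

lemma HasAllMoments.integrable_eval_s4 (hμ : HasAllMoments μ) (f : ℝ[X]) :
    Integrable (fun x ↦ f.eval x) μ := by
  simp_rw [eval_eq_sum_range]
  exact integrable_finsetSum _ fun n _ ↦ (hμ.integrable_pow n).const_mul _

/-- Integration of polynomials against a measure with all moments finite: the linear functional
whose orthogonal polynomials are those of the measure. -/
def momentFunctional (hμ : HasAllMoments μ) : ℝ[X] →ₗ[ℝ] ℝ where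
  toFun f := ∫ x, f.eval x ∂μ
  map_add' f g := by
    simp_rw [eval_add]
    exact integral_add (hμ.integrable_eval_s4 f) (hμ.integrable_eval_s4 g)
  map_smul' c f := by
    simp_rw [eval_smul]
    exact integral_smul c _

lemma mSupp_eq_support (μ : Measure ℝ) : mSupp μ = μ.support := by
  ext x
  simp only [mSupp, Set.mem_ofPred_eq, Measure.mem_support_iff_forall, pos_iff_ne_zero]

lemma isPositiveOn_momentFunctional (hμ : HasAllMoments μ) (hinf : (mSupp μ).Infinite) :
    IsPositiveOn (momentFunctional hμ) (mSupp μ) := by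
  intro f hf hnonneg
  have hae : 0 ≤ᵐ[μ] fun x ↦ f.eval x := by
    filter_upwards [Measure.support_mem_ae (μ := μ)] with x hx
    exact hnonneg x (mSupp_eq_support μ ▸ hx)
  refine (integral_pos_iff_support_of_nonneg_ae hae (hμ.integrable_eval_s4 f)).2 (pos_iff_ne_zero.2 ?_)
  obtain ⟨x, hx, hxroot⟩ := hinf.exists_notMem_finset f.roots.toFinset
  have hfx : f.eval x ≠ 0 := by simpa [hf] using hxroot
  exact hx _ (f.continuous.continuousAt.eventually_ne hfx)

lemma hasAllMoments_of_integrable_pow_sq (hμ : ∀ n : ℕ, Integrable (fun x : ℝ ↦ (x ^ n) ^ 2) μ) :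
    HasAllMoments μ := by
  have : IsFiniteMeasure μ := (integrable_const_iff_isFiniteMeasure one_ne_zero).1
    (by simpa using hμ 0 : Integrable (fun _ : ℝ ↦ (1 : ℝ)) μ)
  intro n
  have hL2 : MemLp (fun x : ℝ ↦ x ^ n) 2 μ := (memLp_two_iff_integrable_sq (by fun_prop)).2 (hμ n)
  simpa using (hL2.integrable one_le_two).abs

lemma hasAllMoments_and_tendsto_moments {ι : Type*} {l : Filter ι} [l.NeBot]
    {ν : ι → FiniteMeasure ℝ} {κ : FiniteMeasure ℝ} (hκ : Tendsto ν l (𝓝 κ))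
    (hν : ∀ i, HasAllMoments (ν i : Measure ℝ))
    (hbounded : ∀ n : ℕ, ∃ C, ∀ᶠ i in l, ∫ x, x ^ n ∂(ν i : Measure ℝ) ≤ C) :
    HasAllMoments (κ : Measure ℝ) ∧ ∀ n : ℕ, Tendsto (fun i ↦ ∫ x, x ^ n ∂(ν i : Measure ℝ)) l
      (𝓝 (∫ x, x ^ n ∂(κ : Measure ℝ))) := by
  have hint (n : ℕ) (i : ι) : Integrable (fun x : ℝ ↦ (x ^ n) ^ 2) (ν i : Measure ℝ) := by
    simpa only [← pow_mul] using (hν i).integrable_pow (n * 2)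
  have hsq (n : ℕ) : ∃ C, ∀ᶠ i in l, ∫ x, (x ^ n) ^ 2 ∂(ν i : Measure ℝ) ≤ C := by
    simpa only [← pow_mul] using hbounded (n * 2)
  constructor
  · refine hasAllMoments_of_integrable_pow_sq fun n ↦ ?_
    obtain ⟨C, hC⟩ := hsq n
    exact (integrable_and_integral_le_of_tendsto_finiteMeasure hκ (by fun_prop)
      (fun x ↦ sq_nonneg _) (hint n) hC).1
  · intro n
    obtain ⟨C, hC⟩ := hsq n
    exact tendsto_integral_of_tendsto_finiteMeasure hκ ⟨fun x ↦ x ^ n, by fun_prop⟩ (hint n) hC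

theorem IsDeterminate.tendsto_of_tendsto_moments {μ : FiniteMeasure ℝ}
    (hdet : IsDeterminate (μ : Measure ℝ)) {ι : Type*} {l : Filter ι} {ν : ι → FiniteMeasure ℝ}
    (hν : ∀ i, HasAllMoments (ν i : Measure ℝ))
    (hmoments : ∀ n : ℕ, Tendsto (fun i ↦ ∫ x, x ^ n ∂(ν i : Measure ℝ)) l
      (𝓝 (∫ x, x ^ n ∂(μ : Measure ℝ)))) :
    Tendsto ν l (𝓝 μ) := by
  have hbounded (n : ℕ) :
      ∀ᶠ i in l, ∫ x, x ^ n ∂(ν i : Measure ℝ) ≤ ∫ x, x ^ n ∂(μ : Measure ℝ) + 1 :=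
    (hmoments n).eventually_le_const (lt_add_one _)
  obtain ⟨𝒦, h𝒦, hmem⟩ := exists_isCompact_finiteMeasure_of_sq_moment_le (E := ℝ) (μ.mass + 1)
    (∫ x, x ^ 2 ∂(μ : Measure ℝ) + 1)
  refine h𝒦.tendsto_nhds_of_unique_mapClusterPt ?_ fun κ _ hκ ↦ ?_
  · filter_upwards [hbounded 0, hbounded 2] with i hmass hsq
    refine hmem (ν i) ?_ (by simpa using (hν i).integrable_pow 2) (by simpa using hsq)
    have hmass' : ((ν i).mass : ℝ) ≤ μ.mass + 1 := by simpa using hmass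
    exact_mod_cast hmass'
  · obtain ⟨u, hul, hu⟩ := mapClusterPt_iff_ultrafilter.1 hκ
    obtain ⟨hκmom, hκlim⟩ := hasAllMoments_and_tendsto_moments hu hν fun n ↦
      ⟨_, (hbounded n).filter_mono hul⟩
    exact Subtype.ext <| hdet κ hκmom fun n ↦
      tendsto_nhds_unique (hκlim n) ((hmoments n).mono_left hul)

end Moments

section AtomicMeasure

variable {α : Type*} [MeasurableSpace α]

/-- The measure with an atom of mass `w z` at each point `z` of the finite set `Z`, the form taken
by quadrature formulas. -/
def atomicMeasure (Z : Finset α) (w : α → ℝ≥0) : FiniteMeasure α :=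
  ⟨∑ z ∈ Z, w z • Measure.dirac z, inferInstance⟩

variable (Z : Finset α) (w : α → ℝ≥0)

lemma toMeasure_atomicMeasure :
    (atomicMeasure Z w : Measure α) = ∑ z ∈ Z, w z • Measure.dirac z := rfl

variable [MeasurableSingletonClass α]

lemma integrable_atomicMeasure (f : α → ℝ) : Integrable f (atomicMeasure Z w : Measure α) := by
  rw [toMeasure_atomicMeasure, integrable_finsetSum_measure]
  exact fun z _ ↦ (integrable_dirac enorm_lt_top).smul_measure_nnreal

lemma integral_atomicMeasure (f : α → ℝ) :
    ∫ x, f x ∂(atomicMeasure Z w : Measure α) = ∑ z ∈ Z, w z * f z := by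
  rw [toMeasure_atomicMeasure, integral_finsetSum_measure fun z _ ↦
    (integrable_dirac enorm_lt_top).smul_measure_nnreal]
  simp [NNReal.smul_def]

lemma atomicMeasure_compl : (atomicMeasure Z w : Measure α) (Z : Set α)ᶜ = 0 := by
  rw [toMeasure_atomicMeasure, Measure.finsetSum_apply]
  exact Finset.sum_eq_zero fun z hz ↦ by simp [hz]

end AtomicMeasure

section Quadrature

variable {μ : Measure ℝ}

lemma exists_gaussMeasure (hμ : HasAllMoments μ) {P : ℝ[X]}
    (hP : IsOrthogonalToLower (momentFunctional hμ) P) {Z : Finset ℝ} (hZ : P.degree = Z.card)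
    (hroot : ∀ z ∈ Z, P.IsRoot z) :
    ∃ ν : FiniteMeasure ℝ, HasAllMoments (ν : Measure ℝ) ∧ (ν : Measure ℝ) (Z : Set ℝ)ᶜ = 0 ∧
      ∀ f : ℝ[X], f.degree < (2 * Z.card : ℕ) →
        ∫ x, f.eval x ∂(ν : Measure ℝ) = ∫ x, f.eval x ∂μ := by
  let w (z : ℝ) : ℝ := momentFunctional hμ (Lagrange.basis Z id z)
  have hw : ∀ z ∈ Z, 0 ≤ w z := by
    intro z hz
    change 0 ≤ momentFunctional hμ _
    rw [hP.apply_basis_eq_apply_basis_sq hZ hroot hz]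
    exact integral_nonneg fun x ↦ by simpa using sq_nonneg _
  refine ⟨atomicMeasure Z fun z ↦ (w z).toNNReal, fun n ↦ integrable_atomicMeasure _ _ _,
    atomicMeasure_compl _ _, fun f hf ↦ ?_⟩
  calc ∫ x, f.eval x ∂(atomicMeasure Z fun z ↦ (w z).toNNReal : Measure ℝ)
      = ∑ z ∈ Z, w z * f.eval z := by
        rw [integral_atomicMeasure]
        exact Finset.sum_congr rfl fun z hz ↦ by rw [Real.coe_toNNReal _ (hw z hz)]
    _ = ∫ x, f.eval x ∂μ := (hP.gauss_quadrature hZ hroot hf).symm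

variable {p : ℕ → ℝ[X]}

theorem IsDeterminate.eventually_exists_root_mem (hdet : IsDeterminate μ) (hμ : HasAllMoments μ)
    (hinf : (mSupp μ).Infinite) (hdeg : ∀ n, (p n).degree = n)
    (hp : ∀ n, IsOrthogonalToLower (momentFunctional hμ) (p n)) {U : Set ℝ} (hU : IsOpen U)
    (hμU : (mSupp μ ∩ U).Nonempty) :
    ∀ᶠ n in atTop, ∃ z ∈ (p n).roots.toFinset, z ∈ U := by
  have hfin := hμ.isFiniteMeasure_s4
  have hp0 (n : ℕ) : p n ≠ 0 := fun h ↦ by simpa [h] using hdeg n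
  have hL := isPositiveOn_momentFunctional hμ hinf
  have hcard (n : ℕ) : (p n).roots.toFinset.card = n := by
    rw [Multiset.toFinset_card_of_nodup (hL.nodup_roots (hp n) (hp0 n)),
      ← (hL.splits (hp n) (hp0 n)).natDegree_eq_card_roots, natDegree_eq_of_degree_eq_some (hdeg n)]
  choose ν hνmom hνroots hνquad using fun n ↦ exists_gaussMeasure hμ (hp n)
    (by rw [hdeg, hcard]) fun z hz ↦ isRoot_of_mem_roots (Multiset.mem_toFinset.1 hz)
  have hmoments (m : ℕ) : Tendsto (fun n ↦ ∫ x, x ^ m ∂(ν n : Measure ℝ)) atTop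
      (𝓝 (∫ x, x ^ m ∂μ)) := by
    refine tendsto_const_nhds.congr' ?_
    filter_upwards [eventually_gt_atTop m] with n hn
    have hlt : (X ^ m : ℝ[X]).degree < (2 * (p n).roots.toFinset.card : ℕ) := by
      rw [degree_X_pow, hcard]
      exact_mod_cast (by lia : m < 2 * n)
    simpa using (hνquad n _ hlt).symm
  have hweak : Tendsto ν atTop (𝓝 ⟨μ, hfin⟩) :=
    IsDeterminate.tendsto_of_tendsto_moments (μ := ⟨μ, hfin⟩) hdet hνmom hmoments
  obtain ⟨x, hxS, hxU⟩ := hμU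
  filter_upwards [eventually_measure_ne_zero_of_isOpen hweak hU (hxS U (hU.mem_nhds hxU))] with n hn
  by_contra! hdisj
  exact hn (measure_mono_null (fun z hz hzroot ↦ hdisj z hzroot hz) (hνroots n))

end Quadrature

theorem stmt4 (μ : Measure ℝ) (hmom : HasAllMoments μ) (hinf : (mSupp μ).Infinite)
    (hdet : IsDeterminate μ) (hsupp : mSupp μ ⊆ Set.Ici (0 : ℝ))
    (h0 : (0 : ℝ) ∈ mSupp μ) (hnotisol : (0 : ℝ) ∈ closure (mSupp μ \ {0}))
    (p : ℕ → Polynomial ℝ)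
    (hdeg : ∀ n : ℕ, (p n).degree = n)
    (hlead : ∀ n : ℕ, 0 < (p n).leadingCoeff)
    (horth : ∀ n m : ℕ,
      ∫ x, (p n).eval x * (p m).eval x ∂μ = if n = m then 1 else 0)
    (k : ℕ) :
    (∀ n : ℕ, k + 1 ≤ n → (p n).coeff (k + 1) ≠ 0) ∧
      Tendsto (fun n : ℕ => |(p n).coeff k / (p n).coeff (k + 1)|) atTop (nhds 0) := by
  have hp0 (n : ℕ) : p n ≠ 0 := leadingCoeff_ne_zero.1 (hlead n).ne'
  have hp : ∀ n, IsOrthogonalToLower (momentFunctional hmom) (p n) :=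
    isOrthogonalToLower_of_pairwise hdeg fun n m hnm ↦ by
      simpa [momentFunctional, hnm] using horth n m
  have hL := isPositiveOn_momentFunctional hmom hinf
  have hsplits (n : ℕ) : (p n).Splits := hL.splits (hp n) (hp0 n)
  have hpos (n : ℕ) : ∀ z ∈ (p n).roots, 0 < z := fun z hz ↦ hL.lt_of_mem_roots (hp n) hsupp hz
  refine ⟨fun n hn ↦ coeff_ne_zero_of_splits (hsplits n) (hp0 n) (hpos n) ?_,
    tendsto_abs_coeff_div_of_roots_accumulate hsplits (fun n z hz ↦ (hpos n z hz).le) k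
      fun δ hδ ↦ ?_⟩
  · rwa [natDegree_eq_of_degree_eq_some (hdeg n)]
  · have hinfδ := infinite_inter_of_mem_closure_diff_singleton hnotisol (Iio_mem_nhds hδ)
    have hmany := eventually_le_card_filter_mem_of_infinite
      (fun V hV ↦ hdet.eventually_exists_root_mem hmom hinf hdeg hp hV) isOpen_Iio hinfδ (k + 1)
    filter_upwards [hmany] with n hn
    rw [← Multiset.toFinset_filter] at hn
    exact hn.trans (Multiset.toFinset_card_le _)
end
end
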